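/- arXiv:2301.09699 — 4 statements merged into one kernel-verified Lean document; each statement's English description precedes it below -/
import Mathlib

section
/- For every real number x > 0, the series ∑_{n=0}^∞ (-1)^n · C(x,n) · L_n(1) converges and its sum equals 1/Γ(x+1), where Γ is the real Gamma function. -/
/-- The generalized binomial coefficient `C(x, n) = x (x-1) ⋯ (x-n+1) / n!`. -/
noncomputable def genBinom (x : ℝ) (n : ℕ) : ℝ :=
  (∏ i ∈ Finset.range n, (x - i)) / (Nat.factorial n : ℝ)

/-- The value of the `n`-th Laguerre polynomial at `1`:
`L_n(1) = ∑_{k=0}^n C(n,k) (-1)^k / k!`. -/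
noncomputable def laguerreOne (n : ℕ) : ℝ :=
  ∑ k ∈ Finset.range (n + 1), (Nat.choose n k : ℝ) * (-1) ^ k / (Nat.factorial k : ℝ)


/-- The generalized binomial coefficient agrees with the library `Ring.choose`. -/
lemma genBinom_eq_choose (x : ℝ) (n : ℕ) : genBinom x n = Ring.choose x n := by
  have h : ∀ n : ℕ, (descPochhammer ℤ n).smeval x = ∏ i ∈ Finset.range n, (x - i) := by
    intro n
    induction n with
    | zero => simp
    | succ n ih =>
      rw [descPochhammer_succ_right, Polynomial.smeval_mul, ih, Finset.prod_range_succ]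
      simp [Polynomial.smeval_sub, Polynomial.smeval_natCast]
  rw [Ring.choose_eq_smul, h, genBinom, smul_eq_mul]
  field_simp

lemma genBinom_succ (x : ℝ) (n : ℕ) :
    ((n : ℝ) + 1) * genBinom x (n + 1) = (x - n) * genBinom x n := by
  have h1 : (n.factorial : ℝ) ≠ 0 := by positivity
  have h2 : (n : ℝ) + 1 ≠ 0 := by positivity
  simp only [genBinom, Finset.prod_range_succ, Nat.factorial_succ]
  push_cast
  field_simp

/-- Absolute summability of the generalized binomial coefficients, by telescoping. -/
lemma summable_abs_genBinom (x : ℝ) (hx : 0 < x) : Summable (fun n => |genBinom x n|) := by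
  obtain ⟨M, hM⟩ := exists_nat_ge x
  rw [← summable_nat_add_iff M]
  have key : ∀ n : ℕ, |genBinom x (n + M)| * x =
      ((n + M : ℕ) : ℝ) * |genBinom x (n + M)| -
        ((n + 1 + M : ℕ) : ℝ) * |genBinom x (n + 1 + M)| := by
    intro n
    have h := congrArg abs (genBinom_succ x (n + M))
    rw [abs_mul, abs_mul] at h
    have h3 : x - ((n + M : ℕ) : ℝ) ≤ 0 := by push_cast; have : (0:ℝ) ≤ n := n.cast_nonneg; linarith
    rw [abs_of_nonpos h3, abs_of_nonneg (by positivity)] at h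
    have e : n + 1 + M = n + M + 1 := by ring
    rw [e]
    push_cast at h ⊢
    linarith
  refine summable_of_sum_range_le (c := (M : ℝ) * |genBinom x M| / x) (fun n => abs_nonneg _) ?_
  intro N
  rw [le_div_iff₀ hx, Finset.sum_mul]
  simp_rw [key]
  rw [Finset.sum_range_sub' (fun n => ((n + M : ℕ) : ℝ) * |genBinom x (n + M)|)]
  simp only [zero_add]
  have : 0 ≤ ((N + M : ℕ) : ℝ) * |genBinom x (N + M)| := by positivity
  linarith

/-- The binomial series. -/
lemma hasSum_genBinom (x r : ℝ) (h0 : 0 ≤ r) (h1 : r < 1) :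
    HasSum (fun n => genBinom x n * (-r) ^ n) ((1 - r) ^ x) := by
  have h := (Real.one_add_rpow_hasFPowerSeriesOnBall_zero (a := x)).hasSum (y := -r)
    (by simp [abs_of_nonneg h0, enorm_eq_nnnorm, ← NNReal.coe_lt_coe, h1])
  simp only [binomialSeries_apply] at h
  simpa [genBinom_eq_choose, sub_eq_add_neg] using h

/-- The binomial series, differentiated `k` times. -/
lemma hasSum_genBinom_choose (x r : ℝ) (h0 : 0 ≤ r) (h1 : r < 1) (k : ℕ) :
    HasSum (fun n => (n.choose k : ℝ) * (genBinom x n * (-r) ^ n))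
      (genBinom x k * (-r) ^ k * (1 - r) ^ (x - k)) := by
  have h := (hasSum_genBinom (x - k) r h0 h1).mul_left (genBinom x k * (-r) ^ k)
  rw [← hasSum_nat_add_iff' k]
  have hz : ∑ i ∈ Finset.range k, (i.choose k : ℝ) * (genBinom x i * (-r) ^ i) = 0 := by
    apply Finset.sum_eq_zero
    intro i hi
    rw [Nat.choose_eq_zero_of_lt (Finset.mem_range.mp hi)]
    simp
  rw [hz, sub_zero]
  refine (congrArg (fun f => HasSum f _) (funext fun n => ?_)).mpr h
  have := Ring.choose_smul_choose x (Nat.le_add_left k n)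
  rw [nsmul_eq_mul, Nat.add_sub_cancel] at this
  rw [genBinom_eq_choose, genBinom_eq_choose, genBinom_eq_choose, ← mul_assoc, this, pow_add]
  ring

/-- Coefficients of the discretised Laguerre (Meixner) polynomials. -/
noncomputable def mcoef (K k : ℕ) : ℝ := (K.choose k : ℝ) * (-1 / (K : ℝ)) ^ k

/-- Discretised Laguerre (Meixner) value. -/
noncomputable def mval (K n : ℕ) : ℝ :=
  ∑ k ∈ Finset.range (K + 1), (n.choose k : ℝ) * mcoef K k

/-- Auxiliary momentum. -/
noncomputable def mmom (K n : ℕ) : ℝ :=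
  ∑ k ∈ Finset.range (K + 1), (k : ℝ) * (n.choose k : ℝ) * mcoef K k

lemma mcoef_succ (K : ℕ) (hK : 0 < K) (k : ℕ) (hk : k ≤ K) :
    ((k : ℝ) + 1) * mcoef K (k + 1) = -mcoef K k + k * mcoef K k / K := by
  have hK' : (K : ℝ) ≠ 0 := by positivity
  have h := Nat.choose_succ_right_eq K k
  have h' : (K.choose (k + 1) : ℝ) * (k + 1) = K.choose k * ((K : ℝ) - k) := by
    rw [← Nat.cast_sub hk]; exact_mod_cast h
  unfold mcoef
  rw [pow_succ]
  calc _ = (K.choose (k + 1) : ℝ) * (k + 1) * ((-1 / (K : ℝ)) ^ k * (-1 / K)) := by ring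
    _ = _ := by rw [h']; field_simp; ring

lemma mval_succ (K n : ℕ) :
    ((n : ℝ) + 1) * (mval K (n + 1) - mval K n) = mmom K (n + 1) := by
  unfold mval mmom
  rw [← Finset.sum_sub_distrib, Finset.mul_sum]
  refine Finset.sum_congr rfl fun k _ => ?_
  cases k with
  | zero => simp
  | succ k =>
    have h := Nat.add_one_mul_choose_eq n k
    have h' : ((n : ℝ) + 1) * n.choose k = (n + 1).choose (k + 1) * ((k : ℝ) + 1) := by
      exact_mod_cast h
    have h2 : ((n + 1).choose (k + 1) : ℝ) = n.choose k + n.choose (k + 1) := by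
      exact_mod_cast Nat.choose_succ_succ n k
    push_cast
    calc _ = ((n : ℝ) + 1) * (((n + 1).choose (k + 1) : ℝ) - n.choose (k + 1)) * mcoef K (k + 1) := by
          ring
      _ = ((n : ℝ) + 1) * n.choose k * mcoef K (k + 1) := by rw [h2]; ring
      _ = _ := by rw [h']; ring

lemma mmom_succ (K : ℕ) (hK : 0 < K) (n : ℕ) :
    mmom K (n + 1) = mmom K n * (1 + 1 / K) - mval K n := by
  have hz : mcoef K (K + 1) = 0 := by simp [mcoef]
  have h1 : mmom K (n + 1) - mmom K n =
      ∑ k ∈ Finset.range (K + 1), (n.choose k : ℝ) * (((k : ℝ) + 1) * mcoef K (k + 1)) := by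
    rw [Finset.sum_range_succ, hz]
    unfold mmom
    rw [← Finset.sum_sub_distrib, Finset.sum_range_succ']
    simp only [Nat.cast_zero, zero_mul, sub_zero, add_zero, mul_zero]
    refine Finset.sum_congr rfl fun k _ => ?_
    have h2 : ((n + 1).choose (k + 1) : ℝ) = n.choose k + n.choose (k + 1) := by
      exact_mod_cast Nat.choose_succ_succ n k
    rw [h2]; push_cast; ring
  have h2 : ∑ k ∈ Finset.range (K + 1), (n.choose k : ℝ) * (((k : ℝ) + 1) * mcoef K (k + 1)) =
      -mval K n + mmom K n / K := by
    unfold mval mmom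
    rw [← Finset.sum_neg_distrib, Finset.sum_div, ← Finset.sum_add_distrib]
    refine Finset.sum_congr rfl fun k hk => ?_
    rw [mcoef_succ K hK k (by have := Finset.mem_range.mp hk; omega)]
    ring
  rw [h2] at h1
  linear_combination h1

/-- One step of the energy estimate. -/
lemma energy_step (m r L P L' P' : ℝ) (hm : 1 ≤ m) (h0 : 0 ≤ r) (h1 : r ≤ 1)
    (hP : P' = P - r * L) (hL : (m + 1) * L' = (m + 1) * (r * L) + P')
    (hE : m * L ^ 2 - L * P + P ^ 2 ≤ 4 / 3 * (m - 1 / 4)) :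
    (m + 1) * L' ^ 2 - L' * P' + P' ^ 2 ≤ 4 / 3 * (m + 1 - 1 / 4) := by
  have hm1 : m + 1 ≠ 0 := by positivity
  have e : (m + 1) * L' ^ 2 - L' * P' + P' ^ 2 = (m + 1) * (r * L) ^ 2 - (r * L) * P + P ^ 2 := by
    have hL2 : L' = r * L + P' / (m + 1) := by field_simp; linarith
    rw [hL2, hP]; field_simp; ring
  rw [e]
  have hL2 : L ^ 2 ≤ 4 / 3 := by nlinarith [sq_nonneg (P - L / 2)]
  have hP2 : P ^ 2 ≤ 4 / 3 * m := by
    have : P ^ 2 * (m - 1 / 4) ≤ 4 / 3 * m * (m - 1 / 4) := by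
      nlinarith [sq_nonneg (m * L - P / 2)]
    exact le_of_mul_le_mul_right this (by linarith)
  have hA : (m + 1) * L ^ 2 - L * P + P ^ 2 ≤ 4 / 3 * (m + 1 - 1 / 4) := by linarith
  have hc : (m + 1) * (r * L) ^ 2 - (r * L) * P + P ^ 2 ≤
      r * ((m + 1) * L ^ 2 - L * P + P ^ 2) + (1 - r) * P ^ 2 := by
    have : 0 ≤ r * (1 - r) * ((m + 1) * L ^ 2) := by
      have : 0 ≤ 1 - r := by linarith
      positivity
    nlinarith
  have h3 : r * ((m + 1) * L ^ 2 - L * P + P ^ 2) ≤ r * (4 / 3 * (m + 1 - 1 / 4)) :=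
    mul_le_mul_of_nonneg_left hA h0
  have h4 : (1 - r) * P ^ 2 ≤ (1 - r) * (4 / 3 * (m + 1 - 1 / 4)) :=
    mul_le_mul_of_nonneg_left (by linarith) (by linarith)
  linarith

lemma mval_zero (K : ℕ) : mval K 0 = 1 := by
  unfold mval
  rw [Finset.sum_range_succ']
  simp [mcoef]

lemma mmom_zero (K : ℕ) : mmom K 0 = 0 := by
  unfold mmom
  rw [Finset.sum_range_succ']
  simp

/-- Uniform bound for the discretised Laguerre values. -/
lemma mval_bound (K : ℕ) (hK : 0 < K) (r : ℝ) (hr : r = K / (K + 1)) (n : ℕ) :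
    |r ^ n * mval K n| ≤ 2 := by
  have hK' : (0 : ℝ) < K := by exact_mod_cast hK
  have h0 : 0 < r := by rw [hr]; positivity
  have h1 : r ≤ 1 := by rw [hr, div_le_one (by positivity)]; linarith
  have hrK : r * (1 + 1 / K) = 1 := by rw [hr]; field_simp
  have sP : ∀ n, r ^ (n + 1) * mmom K (n + 1) = r ^ n * mmom K n - r * (r ^ n * mval K n) := by
    intro n
    rw [mmom_succ K hK, pow_succ]
    linear_combination (r ^ n * mmom K n) * hrK
  have sL : ∀ n : ℕ, ((n : ℝ) + 1) * (r ^ (n + 1) * mval K (n + 1)) =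
      ((n : ℝ) + 1) * (r * (r ^ n * mval K n)) + r ^ (n + 1) * mmom K (n + 1) := by
    intro n
    rw [← mval_succ, pow_succ]; ring
  have E : ∀ n : ℕ, ((n : ℝ) + 1) * (r ^ (n + 1) * mval K (n + 1)) ^ 2
      - (r ^ (n + 1) * mval K (n + 1)) * (r ^ (n + 1) * mmom K (n + 1))
      + (r ^ (n + 1) * mmom K (n + 1)) ^ 2 ≤ 4 / 3 * ((n : ℝ) + 1 - 1 / 4) := by
    intro n
    induction n with
    | zero =>
      have a := sP 0
      have b := sL 0
      simp only [mval_zero, mmom_zero, pow_zero, Nat.cast_zero, zero_add, one_mul, mul_one,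
        zero_sub] at a b ⊢
      rw [a] at b ⊢
      rw [b]
      nlinarith
    | succ n ih =>
      have := energy_step _ r _ _ _ _ (by have : (0:ℝ) ≤ n := n.cast_nonneg
                                          linarith) h0.le h1 (sP (n + 1)) (by exact_mod_cast sL (n + 1)) ih
      push_cast
      exact this
  cases n with
  | zero => simp [mval_zero]
  | succ n =>
    have e := E n
    set L := r ^ (n + 1) * mval K (n + 1)
    set P := r ^ (n + 1) * mmom K (n + 1)
    have hn : (0:ℝ) ≤ n := n.cast_nonneg
    have : L ^ 2 ≤ 4 / 3 := by nlinarith [sq_nonneg (P - L / 2)]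
    exact abs_le_of_sq_le_sq (by linarith) (by norm_num)

/-- The exact evaluation of the discretised series. -/
lemma hasSum_mval (x : ℝ) (K : ℕ) (hK : 0 < K) (r : ℝ) (hr : r = K / (K + 1)) :
    HasSum (fun n => (-1) ^ n * genBinom x n * (r ^ n * mval K n))
      ((1 - r) ^ x * Ring.choose (x + K) K) := by
  have hK' : (0 : ℝ) < K := by exact_mod_cast hK
  have h0 : 0 < r := by rw [hr]; positivity
  have h1 : r < 1 := by rw [hr, div_lt_one (by positivity)]; linarith
  have hq : 0 < 1 - r := by linarith
  have hrq : r = K * (1 - r) := by rw [hr]; field_simp; ring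
  have h := hasSum_sum (s := Finset.range (K + 1)) fun k _ =>
    (hasSum_genBinom_choose x r h0.le h1 k).mul_left (mcoef K k)
  have e1 : (fun n => (-1) ^ n * genBinom x n * (r ^ n * mval K n)) = fun n : ℕ =>
      ∑ i ∈ Finset.range (K + 1), mcoef K i * ((n.choose i : ℝ) * (genBinom x n * (-r) ^ n)) := by
    ext n
    unfold mval
    rw [Finset.mul_sum, Finset.mul_sum]
    refine Finset.sum_congr rfl fun k _ => ?_
    rw [neg_pow]; ring
  have e2 : (1 - r) ^ x * Ring.choose (x + K) K = ∑ i ∈ Finset.range (K + 1),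
      mcoef K i * (genBinom x i * (-r) ^ i * (1 - r) ^ (x - i)) := by
    rw [Ring.add_choose_eq K (Commute.all x (K : ℝ)), Finset.Nat.sum_antidiagonal_eq_sum_range_succ_mk,
      Finset.mul_sum]
    refine Finset.sum_congr rfl fun k hk => ?_
    have hk' : k ≤ K := by have := Finset.mem_range.mp hk; omega
    rw [Ring.choose_natCast, Nat.choose_symm hk', Real.rpow_sub hq, Real.rpow_natCast,
      genBinom_eq_choose]
    unfold mcoef
    have : (-1 / (K : ℝ)) ^ k * (-r) ^ k = (1 - r) ^ k := by
      rw [← mul_pow]; congr 1; field_simp; linarith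
    have hne : (1 - r) ^ k ≠ 0 := by positivity
    calc _ = (K.choose k : ℝ) * Ring.choose x k * (1 - r) ^ x * ((1 - r) ^ k / (1 - r) ^ k) := by
          rw [div_self hne]; ring
      _ = (K.choose k : ℝ) * Ring.choose x k * (1 - r) ^ x *
          (((-1 / (K : ℝ)) ^ k * (-r) ^ k) / (1 - r) ^ k) := by rw [this]
      _ = _ := by ring
  rw [e1, e2]
  exact h

lemma choose_add_eq (x : ℝ) (K : ℕ) :
    Ring.choose (x + K) K = (∏ j ∈ Finset.range K, (x + ((j + 1 : ℕ) : ℝ))) / K.factorial := by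
  rw [← genBinom_eq_choose, genBinom, ← Finset.prod_range_reflect]
  congr 1
  refine Finset.prod_congr rfl fun j hj => ?_
  have hj' := Finset.mem_range.mp hj
  have : ((K - 1 - j : ℕ) : ℝ) = (K : ℝ) - 1 - j := by
    rw [Nat.sub_sub, Nat.cast_sub (by omega)]; push_cast; ring
  rw [this]; push_cast; ring

open Filter Topology in
lemma tendsto_choose_gamma (x : ℝ) (hx : 0 < x) :
    Tendsto (fun K : ℕ => (1 - (K : ℝ) / (K + 1)) ^ x * Ring.choose (x + K) K) atTop
      (𝓝 (1 / Real.Gamma (x + 1))) := by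
  have hG := Real.Gamma_pos_of_pos hx
  have h1 := ((Real.GammaSeq_tendsto_Gamma x).inv₀ hG.ne').mul_const (x⁻¹)
  have h2 : Tendsto (fun K : ℕ => ((K : ℝ) / (K + 1)) ^ x) atTop (𝓝 1) := by
    have := (tendsto_natCast_div_add_atTop (1 : ℝ)).rpow_const (p := x) (Or.inl one_ne_zero)
    simpa using this
  have h3 := h2.mul h1
  rw [Real.Gamma_add_one hx.ne']
  have e : 1 / (x * Real.Gamma x) = 1 * ((Real.Gamma x)⁻¹ * x⁻¹) := by field_simp
  rw [e]
  refine h3.congr' ?_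
  filter_upwards [eventually_gt_atTop 0] with K hK
  have hK' : (0 : ℝ) < K := by exact_mod_cast hK
  rw [choose_add_eq, Real.GammaSeq, Finset.prod_range_succ']
  have e2 : 1 - (K : ℝ) / (K + 1) = 1 / (K + 1) := by field_simp; ring
  rw [e2, Real.div_rpow (by positivity) (by positivity), Real.div_rpow (by positivity) (by positivity)]
  have a1 : (K : ℝ) ^ x ≠ 0 := by positivity
  have a2 : ((K : ℝ) + 1) ^ x ≠ 0 := by positivity
  have a3 : (K.factorial : ℝ) ≠ 0 := by positivity
  simp only [Nat.cast_zero, add_zero, Real.one_rpow]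
  field_simp

open Filter Topology in
lemma tendsto_mval (n : ℕ) :
    Tendsto (fun K : ℕ => ((K : ℝ) / (K + 1)) ^ n * mval K n) atTop (𝓝 (laguerreOne n)) := by
  have h1 : Tendsto (fun K : ℕ => ((K : ℝ) / (K + 1)) ^ n) atTop (𝓝 1) := by
    simpa using (tendsto_natCast_div_add_atTop (1 : ℝ)).pow n
  have hc : ∀ k : ℕ, Tendsto (fun K : ℕ => mcoef K k) atTop (𝓝 ((-1) ^ k / k.factorial)) := by
    intro k
    have h := (isEquivalent_choose k).mul
      (Asymptotics.IsEquivalent.refl (u := fun K : ℕ => (-1 / (K : ℝ)) ^ k))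
    refine (h.symm.tendsto_nhds ?_)
    refine tendsto_const_nhds.congr' ?_
    filter_upwards [eventually_gt_atTop 0] with K hK
    have hK' : (0 : ℝ) < K := by exact_mod_cast hK
    simp only [Pi.mul_apply]
    rw [div_pow]; field_simp
  have h2 : Tendsto (fun K : ℕ => ∑ k ∈ Finset.range (n + 1), (n.choose k : ℝ) * mcoef K k) atTop
      (𝓝 (laguerreOne n)) := by
    unfold laguerreOne
    refine tendsto_finsetSum _ fun k _ => ?_
    rw [mul_div_assoc]
    exact (hc k).const_mul _
  have h3 := h1.mul h2
  rw [one_mul] at h3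
  refine h3.congr' ?_
  filter_upwards [eventually_ge_atTop n] with K hK
  congr 1
  unfold mval
  refine Finset.sum_subset (by simpa using hK) fun k _ hk => ?_
  rw [Nat.choose_eq_zero_of_lt (by simpa using hk)]
  simp

theorem reciprocal_gamma_newton_series (x : ℝ) (hx : 0 < x) :
    Filter.Tendsto
      (fun N => ∑ n ∈ Finset.range N, (-1) ^ n * genBinom x n * laguerreOne n)
      Filter.atTop (nhds (1 / Real.Gamma (x + 1))) := by
  have hs := (summable_abs_genBinom x hx).mul_right 2
  have hb : ∀ᶠ K : ℕ in Filter.atTop, ∀ n : ℕ,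
      ‖(-1) ^ n * genBinom x n * (((K : ℝ) / (K + 1)) ^ n * mval K n)‖ ≤ |genBinom x n| * 2 := by
    filter_upwards [Filter.eventually_gt_atTop 0] with K hK n
    rw [norm_mul, norm_mul, norm_pow, norm_neg, norm_one, one_pow, one_mul, Real.norm_eq_abs,
      Real.norm_eq_abs]
    exact mul_le_mul_of_nonneg_left (mval_bound K hK _ rfl n) (abs_nonneg _)
  have hp : ∀ n : ℕ, Filter.Tendsto
      (fun K : ℕ => (-1) ^ n * genBinom x n * (((K : ℝ) / (K + 1)) ^ n * mval K n))
      Filter.atTop (nhds ((-1) ^ n * genBinom x n * laguerreOne n)) :=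
    fun n => (tendsto_mval n).const_mul _
  have ht := tendsto_tsum_of_dominated_convergence hs hp hb
  have hg := tendsto_choose_gamma x hx
  have heq : ∑' n : ℕ, (-1) ^ n * genBinom x n * laguerreOne n = 1 / Real.Gamma (x + 1) := by
    refine tendsto_nhds_unique ht (hg.congr' ?_)
    filter_upwards [Filter.eventually_gt_atTop 0] with K hK
    exact (hasSum_mval x K hK _ rfl).tsum_eq.symm
  have hsum : Summable fun n : ℕ => (-1) ^ n * genBinom x n * laguerreOne n := by
    refine Summable.of_norm_bounded hs fun n => ?_
    refine le_of_tendsto (hp n).norm ?_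
    filter_upwards [hb] with K hK
    exact hK n
  rw [← heq]
  exact hsum.hasSum.tendsto_sum_nat
end

section
/- For each nonnegative integer k, the series a_k = ∑_{n=0}^∞ (-1)^n · s(n,k) · L_n(1)/n! converges (with the convention s(n,k) = 0 for k > n), and for every real x > 0 the power series ∑_{k=0}^∞ a_k x^k converges with sum equal to 1/Γ(x+1), where Γ is the real Gamma function. -/
/-- The signed Stirling numbers of the first kind, defined by
`x (x-1) ⋯ (x-n+1) = ∑_{k=0}^n s(n,k) x^k`, with `s(n,k) = 0` for `k > n`. -/
noncomputable def stirlingFirst (n k : ℕ) : ℝ :=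
  (((descPochhammer ℤ n).coeff k : ℤ) : ℝ)

open Polynomial in
/-- The Laguerre polynomials. -/
noncomputable def lag (n : ℕ) : ℝ[X] :=
  ∑ k ∈ Finset.range (n + 1), C ((Nat.choose n k : ℝ) * (-1) ^ k / (Nat.factorial k : ℝ)) * X ^ k

lemma lag_coeff (n k : ℕ) :
    (lag n).coeff k = (Nat.choose n k : ℝ) * (-1) ^ k / (Nat.factorial k : ℝ) := by
  unfold lag
  simp only [Polynomial.finsetSum_coeff, Polynomial.coeff_C_mul, Polynomial.coeff_X_pow]
  simp only [mul_ite, mul_one, mul_zero, Finset.sum_ite_eq, Finset.mem_range]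
  split_ifs with h
  · rfl
  · rw [Nat.choose_eq_zero_of_lt (by omega)]; simp

lemma lag_eval_one (n : ℕ) : (lag n).eval 1 = laguerreOne n := by
  simp [lag, laguerreOne, Polynomial.eval_finsetSum]

lemma lag_zero : lag 0 = 1 := by
  simp [lag]

lemma lag_B (n : ℕ) :
    (lag n).derivative - (lag (n + 1)).derivative = lag n := by
  ext k
  rw [Polynomial.coeff_sub, Polynomial.coeff_derivative, Polynomial.coeff_derivative,
    lag_coeff, lag_coeff, lag_coeff, Nat.choose_succ_succ, Nat.factorial_succ]
  have := Nat.factorial_ne_zero k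
  push_cast
  field_simp
  ring

lemma lag_A (n : ℕ) :
    Polynomial.X * (lag (n + 1)).derivative = ((n : ℝ) + 1) • (lag (n + 1) - lag n) := by
  ext k
  rw [Polynomial.coeff_smul, Polynomial.coeff_sub, smul_eq_mul]
  cases k with
  | zero => simp [lag_coeff]
  | succ k =>
    rw [Polynomial.coeff_X_mul, Polynomial.coeff_derivative, lag_coeff, lag_coeff,
      Nat.choose_succ_succ]
    have h := Nat.add_one_mul_choose_eq n k
    rw [Nat.choose_succ_succ] at h
    have h' : ((n : ℝ) + 1) * (n.choose k) = ((n.choose k : ℝ) + n.choose (k+1)) * (k + 1) := by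
      exact_mod_cast h
    have := Nat.factorial_ne_zero (k + 1)
    push_cast
    field_simp
    linear_combination -h'

lemma lag_ODE (n : ℕ) :
    Polynomial.X * (lag n).derivative.derivative + (lag n).derivative
      - Polynomial.X * (lag n).derivative + (n : ℝ) • lag n = 0 := by
  have key : ∀ k : ℕ, ((k : ℝ) + 1) ^ 2 * (lag n).coeff (k + 1) = ((k : ℝ) - n) * (lag n).coeff k := by
    intro k
    rw [lag_coeff, lag_coeff, Nat.factorial_succ]
    have h' : (n.choose (k+1) : ℝ) * (k + 1) = n.choose k * (n - k) := by
      rcases le_or_gt k n with h | h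
      · have := Nat.choose_succ_right_eq n k
        rw [← Nat.cast_sub h]
        exact_mod_cast this
      · rw [Nat.choose_eq_zero_of_lt h, Nat.choose_eq_zero_of_lt (by omega)]; simp
    have := Nat.factorial_ne_zero k
    push_cast
    field_simp
    linear_combination (-1) ^ (k+1) * h'
  ext k
  rw [Polynomial.coeff_add, Polynomial.coeff_sub, Polynomial.coeff_add, Polynomial.coeff_smul,
    smul_eq_mul]
  cases k with
  | zero =>
    have := key 0
    simp [Polynomial.coeff_derivative] at this ⊢
    linarith
  | succ k =>
    have := key (k + 1)
    rw [Polynomial.coeff_X_mul, Polynomial.coeff_X_mul]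
    simp only [Polynomial.coeff_derivative, Polynomial.coeff_zero]
    push_cast at this ⊢
    linear_combination this

lemma lag_eval_zero (n : ℕ) : (lag n).eval 0 = 1 := by
  rw [← Polynomial.coeff_zero_eq_eval_zero, lag_coeff]; simp

lemma lag_energy (n : ℕ) (t : ℝ) (ht : 0 ≤ t) :
    n * (lag n).eval t ^ 2 + t * (lag n).derivative.eval t ^ 2 ≤ n * Real.exp t ^ 2 := by
  set f : ℝ → ℝ := fun t => Real.exp (-2 * t) *
    (n * (lag n).eval t ^ 2 + t * (lag n).derivative.eval t ^ 2) with hf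
  have hd : ∀ t, HasDerivAt f (Real.exp (-2 * t) *
      (-2 * n * (lag n).eval t ^ 2 - (lag n).derivative.eval t ^ 2)) t := by
    intro t
    have h0 : HasDerivAt (fun t : ℝ => Real.exp (-2 * t)) (Real.exp (-2 * t) * (-2 * 1)) t :=
      ((hasDerivAt_id t).const_mul (-2)).exp
    have h1 := (lag n).hasDerivAt t
    have h2 := (lag n).derivative.hasDerivAt t
    have h := h0.mul (((h1.pow 2).const_mul (n : ℝ)).add ((hasDerivAt_id t).mul (h2.pow 2)))
    refine h.congr_deriv ?_
    have ode := congrArg (Polynomial.eval t) (lag_ODE n)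
    simp at ode
    simp
    linear_combination Real.exp (-(2 * t)) * 2 * (lag n).derivative.eval t * ode
  have hanti : Antitone f := by
    apply antitone_of_deriv_nonpos
    · exact fun t => (hd t).differentiableAt
    · intro t
      rw [(hd t).deriv]
      have : 0 ≤ (n : ℝ) * (lag n).eval t ^ 2 := by positivity
      have h2 := sq_nonneg ((lag n).derivative.eval t)
      exact mul_nonpos_of_nonneg_of_nonpos (Real.exp_pos _).le (by linarith)
  have h := hanti ht
  simp only [hf, lag_eval_zero] at h
  have he : Real.exp t ^ 2 * Real.exp (-2 * t) = 1 := by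
    rw [← Real.exp_nat_mul, ← Real.exp_add]; simp
  have := mul_le_mul_of_nonneg_left h (sq_nonneg (Real.exp t))
  rw [← mul_assoc, he] at this
  simp at this
  linarith

lemma lag_bound (n : ℕ) (t : ℝ) (ht : 0 ≤ t) : |(lag n).eval t| ≤ Real.exp t := by
  rcases Nat.eq_zero_or_pos n with rfl | hn
  · simp [lag_zero, ht]
  · have h := lag_energy n t ht
    have h2 : 0 ≤ t * (lag n).derivative.eval t ^ 2 := by positivity
    have hn' : (0 : ℝ) < n := by exact_mod_cast hn
    have : (lag n).eval t ^ 2 ≤ Real.exp t ^ 2 := by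
      by_contra! hc
      nlinarith
    exact abs_le_of_sq_le_sq this (Real.exp_pos t).le

lemma lag_deriv_bound (n : ℕ) :
    |(lag n).derivative.eval 1| ≤ Real.exp 1 * Real.sqrt n := by
  have h := lag_energy n 1 zero_le_one
  have h2 : 0 ≤ n * (lag n).eval 1 ^ 2 := by positivity
  apply abs_le_of_sq_le_sq _ (by positivity)
  rw [mul_pow, Real.sq_sqrt (by positivity)]
  linarith

lemma lag_deriv_sum (N : ℕ) :
    ∑ n ∈ Finset.range N, laguerreOne n = - (lag N).derivative.eval 1 := by
  induction N with
  | zero => simp [lag_zero]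
  | succ N ih =>
    have := congrArg (Polynomial.eval 1) (lag_B N)
    rw [Polynomial.eval_sub, lag_eval_one] at this
    rw [Finset.sum_range_succ, ih]; linarith

/-- `cc x n = (-1)^n * choose x n`. -/
noncomputable def cc (x : ℝ) : ℕ → ℝ
  | 0 => 1
  | n + 1 => cc x n * ((n : ℝ) - x) / ((n : ℝ) + 1)

lemma cc_succ (x : ℝ) (n : ℕ) : cc x (n + 1) = cc x n * ((n : ℝ) - x) / ((n : ℝ) + 1) := rfl

lemma cc_shift (x : ℝ) (n : ℕ) : ((n : ℝ) + 1) * cc (x + 1) (n + 1) = -(x + 1) * cc x n := by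
  induction n with
  | zero => simp [cc]
  | succ n ih =>
    have h : ((n : ℝ) + 1) ≠ 0 := by positivity
    have h2 : ((n : ℝ) + 1 + 1) ≠ 0 := by positivity
    rw [cc_succ (x + 1) (n + 1), cc_succ x n]
    push_cast
    field_simp
    linear_combination (n - x) * ih

lemma cc_diff (x : ℝ) (n : ℕ) : cc (x + 1) (n + 1) = cc x (n + 1) - cc x n := by
  have h : ((n : ℝ) + 1) ≠ 0 := by positivity
  have := cc_shift x n
  rw [cc_succ x]
  field_simp
  linear_combination this

lemma cc_sum (x : ℝ) (N : ℕ) : (N : ℝ) * cc x N = -x * ∑ n ∈ Finset.range N, cc x n := by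
  induction N with
  | zero => simp
  | succ n ih =>
    have h : ((n : ℝ) + 1) ≠ 0 := by positivity
    rw [Finset.sum_range_succ, cc_succ]
    push_cast
    field_simp
    linear_combination ih

lemma cc_nonpos (x : ℝ) (h0 : 0 < x) (h1 : x < 1) (n : ℕ) : cc x (n + 1) ≤ 0 := by
  induction n with
  | zero => simp [cc]; exact h0.le
  | succ n ih =>
    rw [cc_succ]
    apply div_nonpos_of_nonpos_of_nonneg _ (by positivity)
    apply mul_nonpos_of_nonpos_of_nonneg ih
    push_cast
    have : (0 : ℝ) ≤ n := by positivity
    linarith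

lemma cc_summable (x : ℝ) (h0 : 0 < x) (h1 : x < 1) : Summable (fun n => |cc x n|) := by
  rw [← summable_nat_add_iff 1]
  apply summable_of_sum_range_le (c := 1) (fun n => abs_nonneg _)
  intro N
  have h := cc_sum x (N + 1)
  rw [Finset.sum_range_succ'] at h
  have h2 := cc_nonpos x h0 h1 N
  have h3 : ∑ i ∈ Finset.range N, |cc x (i + 1)| = - ∑ i ∈ Finset.range N, cc x (i + 1) := by
    rw [← Finset.sum_neg_distrib]
    exact Finset.sum_congr rfl fun i _ => abs_of_nonpos (cc_nonpos x h0 h1 i)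
  rw [h3]
  have h4 : cc x 0 = 1 := rfl
  rw [h4] at h
  push_cast at h
  have h5 : ((N : ℝ) + 1) * cc x (N + 1) ≤ 0 :=
    mul_nonpos_of_nonneg_of_nonpos (by positivity) h2
  rw [h] at h5
  nlinarith

lemma cc_shift_abs (x : ℝ) (h0 : 0 < x) (n : ℕ) :
    ((n : ℝ) + 1) * |cc (x + 1) (n + 1)| = (x + 1) * |cc x n| := by
  have := congrArg abs (cc_shift x n)
  rwa [abs_mul, abs_mul, abs_neg, abs_of_pos (by positivity : (0 : ℝ) < n + 1),
    abs_of_pos (by positivity : (0 : ℝ) < x + 1)] at this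

lemma cc_summable' (x : ℝ) (h0 : 0 < x) (h1 : x < 1) : Summable (fun n => |cc (x + 1) n|) := by
  rw [← summable_nat_add_iff 1]
  refine Summable.of_nonneg_of_le (fun n => abs_nonneg _) (fun n => ?_)
    ((cc_summable x h0 h1).mul_left (x + 1))
  rw [← cc_shift_abs x h0]
  have : (0 : ℝ) ≤ n := by positivity
  nlinarith [abs_nonneg (cc (x + 1) (n + 1))]

lemma cc_choose (x : ℝ) (n : ℕ) : (-1) ^ n * Ring.choose x n = cc x n := by
  induction n with
  | zero => simp [cc]
  | succ n ih =>
    have h : ∀ n, (n.factorial : ℝ) * Ring.choose x n = (descPochhammer ℝ n).eval x := by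
      intro n
      have := Ring.descPochhammer_eq_factorial_smul_choose x n
      rw [nsmul_eq_mul] at this
      rw [← this, ← Polynomial.aeval_eq_smeval, Polynomial.aeval_def, Polynomial.eval₂_eq_eval_map,
        descPochhammer_map]
    have h1 := h (n + 1)
    rw [descPochhammer_succ_eval, ← h n, Nat.factorial_succ] at h1
    push_cast at h1
    have hf : (n.factorial : ℝ) ≠ 0 := by exact_mod_cast n.factorial_ne_zero
    have h2 : ((n : ℝ) + 1) * Ring.choose x (n + 1) = Ring.choose x n * (x - n) := by
      apply mul_left_cancel₀ hf
      linear_combination h1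
    rw [cc_succ, ← ih]
    have h : ((n : ℝ) + 1) ≠ 0 := by positivity
    field_simp
    linear_combination (-1) ^ (n + 1) * h2

lemma cc_binomial (x : ℝ) : HasSum (fun n => cc x n * (1 / 2) ^ n) ((1 / 2 : ℝ) ^ x) := by
  have h := (Real.one_add_rpow_hasFPowerSeriesOnBall_zero (a := x)).hasSum (y := -(1/2)) (by
    simp [Real.enorm_eq_ofReal])
  simp only [binomialSeries_apply] at h
  have e : (fun n => cc x n * (1 / 2) ^ n) =
      fun n => Ring.choose x n • (List.ofFn fun _ : Fin n => (-(1 / 2) : ℝ)).prod := by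
    ext n
    rw [← cc_choose]
    simp
    rw [neg_pow (2⁻¹ : ℝ) n]
    simp; ring
  rw [e]
  rw [show (1 : ℝ) + (0 + -(1 / 2)) = 1 / 2 by norm_num] at h
  exact h

lemma lagD_bound (n : ℕ) (t : ℝ) (ht : 0 < t) :
    |(lag (n + 1)).derivative.eval t| ≤ ((n : ℝ) + 1) * (2 * Real.exp t / t) := by
  have h := congrArg (Polynomial.eval t) (lag_A n)
  simp only [Polynomial.eval_mul, Polynomial.eval_X, Polynomial.eval_smul, Polynomial.eval_sub,
    smul_eq_mul] at h
  have h1 := lag_bound (n + 1) t ht.le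
  have h2 := lag_bound n t ht.le
  have h3 := congrArg abs h
  rw [abs_mul, abs_mul, abs_of_pos ht, abs_of_pos (by positivity : (0 : ℝ) < n + 1)] at h3
  have h4 := abs_sub ((lag (n + 1)).eval t) ((lag n).eval t)
  rw [mul_div_assoc', le_div_iff₀ ht, mul_comm, h3]
  exact mul_le_mul_of_nonneg_left (by linarith) (by positivity)

/-- `G y t = ∑ cc y n * L_n(t)`. -/
noncomputable def GG (y t : ℝ) : ℝ := ∑' n, cc y n * (lag n).eval t

lemma summable_mul_of_bdd {u v : ℕ → ℝ} {C : ℝ} (hu : Summable (fun n => |u n|))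
    (hv : ∀ n, |v n| ≤ C) : Summable (fun n => u n * v n) := by
  refine Summable.of_norm_bounded (hu.mul_right C) (fun n => ?_)
  rw [Real.norm_eq_abs, abs_mul]
  exact mul_le_mul_of_nonneg_left (hv n) (abs_nonneg _)

lemma GG_hasDerivAt (x : ℝ) (h0 : 0 < x) (h1 : x < 1) (t : ℝ) (ht : 0 < t) :
    HasDerivAt (GG (x + 1)) (∑' n, cc (x + 1) n * (lag n).derivative.eval t) t := by
  have hu : Summable (fun n : ℕ => (((n : ℝ)) * |cc (x + 1) n|) * (2 * Real.exp (t + 1) / (t / 2))) := by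
    apply Summable.mul_right
    rw [← summable_nat_add_iff 1]
    refine ((cc_summable x h0 h1).mul_left (x + 1)).congr (fun n => ?_)
    rw [← cc_shift_abs x h0]; push_cast; ring
  refine hasDerivAt_tsum_of_isPreconnected (t := Set.Ioo (t / 2) (t + 1)) (y₀ := t) hu isOpen_Ioo
    isPreconnected_Ioo (fun n y hy => ((lag n).hasDerivAt y).const_mul _) ?_
    ⟨by linarith, by linarith⟩ ?_ ⟨by linarith, by linarith⟩
  · intro n y hy
    have hy0 : 0 < y := by have := hy.1; linarith
    cases n with
    | zero => simp [lag_zero]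
    | succ n =>
      rw [Real.norm_eq_abs, abs_mul, mul_comm, mul_right_comm]
      apply mul_le_mul_of_nonneg_right _ (abs_nonneg _)
      refine (lagD_bound n y hy0).trans ?_
      push_cast
      gcongr
      · exact hy.2.le
      · exact hy.1.le
  · exact summable_mul_of_bdd (cc_summable' x h0 h1) (fun n => lag_bound n t ht.le)

lemma GG_ode (x : ℝ) (h0 : 0 < x) (h1 : x < 1) (t : ℝ) (ht : 0 < t) :
    t * (∑' n, cc (x + 1) n * (lag n).derivative.eval t) = (x + 1) * GG (x + 1) t := by
  have s1 : Summable (fun n => cc x n * (lag n).eval t) :=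
    summable_mul_of_bdd (cc_summable x h0 h1) (fun n => lag_bound n t ht.le)
  have s2 : Summable (fun n => cc x n * (lag (n + 1)).eval t) :=
    summable_mul_of_bdd (cc_summable x h0 h1) (fun n => lag_bound (n + 1) t ht.le)
  have s3 : Summable (fun n => cc (x + 1) n * (lag n).eval t) :=
    summable_mul_of_bdd (cc_summable' x h0 h1) (fun n => lag_bound n t ht.le)
  have e1 : GG (x + 1) t = ∑' n, cc x n * (lag n).eval t - ∑' n, cc x n * (lag (n + 1)).eval t := by
    have s1' := (summable_nat_add_iff 1).2 s1
    rw [GG, s3.tsum_eq_zero_add, s1.tsum_eq_zero_add, add_sub_assoc, ← s1'.tsum_sub s2]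
    congr 1
    apply tsum_congr
    intro n
    rw [cc_diff]; ring
  have e2 : ∀ n : ℕ, t * (cc (x + 1) (n + 1) * (lag (n + 1)).derivative.eval t) =
      (x + 1) * (cc x n * (lag n).eval t - cc x n * (lag (n + 1)).eval t) := by
    intro n
    have h := congrArg (Polynomial.eval t) (lag_A n)
    simp only [Polynomial.eval_mul, Polynomial.eval_X, Polynomial.eval_smul, Polynomial.eval_sub,
      smul_eq_mul] at h
    have h2 := cc_shift x n
    linear_combination cc (x + 1) (n + 1) * h +
      ((lag (n + 1)).eval t - (lag n).eval t) * h2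
  rw [e1, ← s1.tsum_sub s2, ← tsum_mul_left, ← tsum_mul_left]
  have s4 : Summable (fun n => t * (cc (x + 1) n * (lag n).derivative.eval t)) := by
    rw [← summable_nat_add_iff 1]
    simp_rw [e2]
    exact (s1.sub s2).mul_left _
  rw [s4.tsum_eq_zero_add]
  simp_rw [e2]
  simp [lag_zero]

lemma GG_eq (x : ℝ) (h0 : 0 < x) (h1 : x < 1) (t : ℝ) (ht : 0 < t) :
    GG (x + 1) t = GG (x + 1) 1 * t ^ (x + 1) := by
  have hd : ∀ s ∈ Set.Ioi (0 : ℝ), HasDerivAt (fun s => GG (x + 1) s * s ^ (-(x + 1))) 0 s := by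
    intro s hs
    have hs0 : 0 < s := hs
    have h := (GG_hasDerivAt x h0 h1 s hs).mul
      (Real.hasDerivAt_rpow_const (x := s) (p := -(x + 1)) (Or.inl hs0.ne'))
    refine h.congr_deriv ?_
    have hode := GG_ode x h0 h1 s hs
    have : s ^ (-(x + 1)) = s * s ^ (-(x + 1) - 1) := by
      rw [Real.rpow_sub_one hs0.ne']; field_simp
    rw [this]
    linear_combination s ^ (-(x + 1) - 1) * hode
  have := isOpen_Ioi.is_const_of_deriv_eq_zero isPreconnected_Ioi
    (fun s hs => (hd s hs).differentiableAt.differentiableWithinAt)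
    (fun s hs => (hd s hs).deriv) (x := t) (y := 1) ht (by simp)
  simp only [Real.one_rpow, mul_one] at this
  rw [← this, mul_assoc, ← Real.rpow_add ht]
  simp

open MeasureTheory in
lemma lag_laplace_int (n : ℕ) :
    IntegrableOn (fun t : ℝ => (lag n).eval t * Real.exp (-(2 * t))) (Set.Ioi 0) ∧
    ∫ t in Set.Ioi (0 : ℝ), (lag n).eval t * Real.exp (-(2 * t)) = (1 / 2) * (1 / 2) ^ n := by
  have hm : ∀ k : ℕ, IntegrableOn (fun t : ℝ => t ^ k * Real.exp (-(2 * t))) (Set.Ioi 0) := by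
    intro k
    have := integrableOn_rpow_mul_exp_neg_mul_rpow (s := k) (p := 1) (b := 2)
      (by have : (0 : ℝ) ≤ k := by positivity
          linarith) one_pos (by norm_num)
    simpa using this
  have hi : ∀ k : ℕ, ∫ t in Set.Ioi (0 : ℝ), t ^ k * Real.exp (-(2 * t)) =
      (1 / 2) ^ (k + 1) * k.factorial := by
    intro k
    have := Real.integral_rpow_mul_exp_neg_mul_Ioi (a := k + 1) (r := 2) (by positivity) two_pos
    rw [Real.Gamma_nat_eq_factorial] at this
    simp only [add_sub_cancel_right, Real.rpow_natCast] at this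
    rw [this]
    norm_cast
  have e : ∀ t : ℝ, (lag n).eval t * Real.exp (-(2 * t)) = ∑ k ∈ Finset.range (n + 1),
      ((Nat.choose n k : ℝ) * (-1) ^ k / (Nat.factorial k : ℝ)) * (t ^ k * Real.exp (-(2 * t))) := by
    intro t
    simp [lag, Polynomial.eval_finsetSum, Finset.sum_mul, mul_assoc]
  simp_rw [e]
  refine ⟨integrable_finsetSum _ fun k _ => (hm k).const_mul _, ?_⟩
  rw [integral_finsetSum _ fun k _ => (hm k).const_mul _]
  simp_rw [integral_const_mul, hi]
  have hb := add_pow (-(1 / 2) : ℝ) 1 n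
  norm_num at hb
  rw [show ((1 : ℝ) / 2) ^ n = (1 / 2) ^ n from rfl]
  norm_num
  rw [hb, Finset.mul_sum]
  apply Finset.sum_congr rfl
  intro k _
  have := Nat.factorial_ne_zero k
  rw [neg_pow (1 / 2 : ℝ) k]
  field_simp
  ring

open MeasureTheory in
lemma GG_one (x : ℝ) (h0 : 0 < x) (h1 : x < 1) :
    GG (x + 1) 1 * Real.Gamma (x + 2) = 1 := by
  have hexp : IntegrableOn (fun t : ℝ => Real.exp (-t)) (Set.Ioi 0) := integrableOn_exp_neg_Ioi 0
  have hbd : ∀ n, ∫ t in Set.Ioi (0 : ℝ), ‖cc (x + 1) n * ((lag n).eval t * Real.exp (-(2 * t)))‖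
      ≤ |cc (x + 1) n| * 1 := by
    intro n
    rw [← integral_exp_neg_Ioi_zero, ← integral_const_mul]
    apply setIntegral_mono_on ((lag_laplace_int n).1.const_mul _).norm (hexp.const_mul _)
      measurableSet_Ioi
    intro t ht
    rw [norm_mul, norm_mul, Real.norm_eq_abs, Real.norm_eq_abs, Real.norm_eq_abs, Real.abs_exp]
    apply mul_le_mul_of_nonneg_left _ (abs_nonneg _)
    calc _ ≤ Real.exp t * Real.exp (-(2 * t)) :=
          mul_le_mul_of_nonneg_right (lag_bound n t (le_of_lt ht)) (Real.exp_pos _).le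
      _ = Real.exp (-t) := by rw [← Real.exp_add]; congr 1; ring
  have hs := hasSum_integral_of_summable_integral_norm (μ := volume.restrict (Set.Ioi (0 : ℝ)))
    (F := fun n t => cc (x + 1) n * ((lag n).eval t * Real.exp (-(2 * t))))
    (fun n => (lag_laplace_int n).1.const_mul _)
    (Summable.of_nonneg_of_le (fun n => integral_nonneg fun t => norm_nonneg _) hbd
      ((cc_summable' x h0 h1).mul_right 1))
  simp_rw [integral_const_mul, (lag_laplace_int _).2] at hs
  have hs2 := (cc_binomial (x + 1)).mul_left (1 / 2)
  have hs3 := hs.unique (hs2.congr_fun (fun n => by ring))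
  have e : ∫ t in Set.Ioi (0 : ℝ), ∑' n, cc (x + 1) n * ((lag n).eval t * Real.exp (-(2 * t))) =
      ∫ t in Set.Ioi (0 : ℝ), GG (x + 1) 1 * (t ^ (x + 2 - 1) * Real.exp (-(2 * t))) := by
    apply setIntegral_congr_fun measurableSet_Ioi
    intro t ht
    simp only
    simp_rw [← mul_assoc]
    rw [tsum_mul_right, show x + 2 - 1 = x + 1 by ring, ← GG_eq x h0 h1 t ht, GG]
  rw [e, integral_const_mul, Real.integral_rpow_mul_exp_neg_mul_Ioi (by linarith) two_pos] at hs3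
  rw [show x + 2 = (x + 1) + 1 by ring, Real.rpow_add_one (by norm_num)] at hs3
  have hp : (0 : ℝ) < (1 / 2) ^ (x + 1) := by positivity
  rw [show x + 2 = (x + 1) + 1 by ring]
  apply mul_left_cancel₀ hp.ne'
  linear_combination 2 * hs3

/-- the value of the derivative series. -/
lemma main_value (x : ℝ) (h0 : 0 < x) (h1 : x < 1) :
    HasSum (fun n => (cc x n - cc x (n + 1)) * (-(lag (n + 1)).derivative.eval 1))
      (1 / Real.Gamma (x + 1)) := by
  have hode := GG_ode x h0 h1 1 one_pos
  have hone := GG_one x h0 h1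
  rw [show x + 2 = (x + 1) + 1 by ring, Real.Gamma_add_one (by linarith)] at hone
  have hs : Summable (fun n => cc (x + 1) n * (lag n).derivative.eval 1) := by
    rw [← summable_nat_add_iff 1]
    refine Summable.of_norm_bounded (((cc_summable x h0 h1).mul_left (x + 1)).mul_right
      (2 * Real.exp 1 / 1)) (fun n => ?_)
    rw [← cc_shift_abs x h0, Real.norm_eq_abs, abs_mul]
    have := mul_le_mul_of_nonneg_left (lagD_bound n 1 one_pos) (abs_nonneg (cc (x + 1) (n + 1)))
    linarith
  have hg : 0 < Real.Gamma (x + 1) := Real.Gamma_pos_of_pos (by linarith)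
  have hv : ∑' n, cc (x + 1) n * (lag n).derivative.eval 1 = 1 / Real.Gamma (x + 1) := by
    rw [eq_div_iff hg.ne']
    rw [one_mul] at hode
    rw [hode]; linarith
  rw [hs.tsum_eq_zero_add] at hv
  have hs' := ((summable_nat_add_iff 1).2 hs).hasSum
  simp only [lag_zero, Polynomial.derivative_one, Polynomial.eval_zero, mul_zero, zero_add] at hv
  rw [hv] at hs'
  refine hs'.congr_fun (fun n => ?_)
  rw [cc_diff]; ring

/-- coefficients of `cc x n` as a polynomial in `x`. -/
noncomputable def pp (n k : ℕ) : ℝ := (-1) ^ n * stirlingFirst n k / (Nat.factorial n : ℝ)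

lemma stirling_eq (n k : ℕ) : (descPochhammer ℝ n).coeff k = stirlingFirst n k := by
  rw [stirlingFirst, ← descPochhammer_map (algebraMap ℤ ℝ), Polynomial.coeff_map]; rfl

lemma pp_zero (k : ℕ) : pp 0 k = if k = 0 then 1 else 0 := by
  simp [pp, ← stirling_eq, Polynomial.coeff_one]

lemma pp_succ_zero (n : ℕ) : pp (n + 1) 0 = n * pp n 0 / (n + 1) := by
  have h : stirlingFirst (n + 1) 0 = - n * stirlingFirst n 0 := by
    rw [← stirling_eq, ← stirling_eq, descPochhammer_succ_right, mul_sub, Polynomial.coeff_sub,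
      Polynomial.coeff_mul_X_zero, Polynomial.coeff_mul_natCast]
    ring
  have hf : (n.factorial : ℝ) ≠ 0 := by exact_mod_cast n.factorial_ne_zero
  rw [pp, pp, h, Nat.factorial_succ]
  push_cast
  field_simp
  ring

lemma pp_succ_succ (n k : ℕ) : pp (n + 1) (k + 1) = (n * pp n (k + 1) - pp n k) / (n + 1) := by
  have h : stirlingFirst (n + 1) (k + 1) = stirlingFirst n k - n * stirlingFirst n (k + 1) := by
    rw [← stirling_eq, ← stirling_eq, ← stirling_eq, descPochhammer_succ_right, mul_sub,
      Polynomial.coeff_sub, Polynomial.coeff_mul_X, Polynomial.coeff_mul_natCast]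
    ring
  have hf : (n.factorial : ℝ) ≠ 0 := by exact_mod_cast n.factorial_ne_zero
  rw [pp, pp, pp, h, Nat.factorial_succ]
  push_cast
  field_simp
  ring

lemma pp_hasSum (x : ℝ) (n : ℕ) : HasSum (fun k => pp n k * x ^ k) (cc x n) := by
  have h1 : cc x n = (-1) ^ n * (descPochhammer ℝ n).eval x / n.factorial := by
    induction n with
    | zero => simp [cc]
    | succ n ih =>
      have hf : (n.factorial : ℝ) ≠ 0 := by exact_mod_cast n.factorial_ne_zero
      rw [cc_succ, ih, descPochhammer_succ_eval, Nat.factorial_succ]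
      push_cast
      field_simp
      ring
  have h2 : HasSum (fun k => (descPochhammer ℝ n).coeff k * x ^ k)
      ((descPochhammer ℝ n).eval x) := by
    rw [Polynomial.eval_eq_sum_range]
    apply hasSum_sum_of_ne_finset_zero
    intro k hk
    rw [Polynomial.coeff_eq_zero_of_natDegree_lt (by
      rw [Finset.mem_range] at hk; omega), zero_mul]
  rw [h1]
  have h3 := (h2.mul_left ((-1) ^ n)).div_const (n.factorial : ℝ)
  refine h3.congr_fun (fun k => ?_)
  rw [pp, stirling_eq]; ring

lemma pp_step (n : ℕ) : ((n : ℝ) + 1 / 4) / (n + 1) * ((n : ℝ) + 1) ^ (-(3 / 4) : ℝ)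
    ≤ ((n : ℝ) + 2) ^ (-(3 / 4) : ℝ) := by
  have hn : (0 : ℝ) ≤ n := by positivity
  have hb := rpow_one_add_le_one_add_mul_self (s := 1 / ((n : ℝ) + 1)) (p := 3 / 4)
    (by have : (0 : ℝ) ≤ 1 / ((n : ℝ) + 1) := by positivity
        linarith) (by norm_num) (by norm_num)
  have e : 1 + 1 / ((n : ℝ) + 1) = (n + 2) / (n + 1) := by field_simp; ring
  rw [e, Real.div_rpow (by positivity) (by positivity)] at hb
  rw [Real.rpow_neg (by positivity), Real.rpow_neg (by positivity)]
  set u := ((n : ℝ) + 1) ^ (3 / 4 : ℝ) with hu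
  set v := ((n : ℝ) + 2) ^ (3 / 4 : ℝ) with hv
  have hu0 : 0 < u := by positivity
  have hv0 : 0 < v := by positivity
  rw [div_le_iff₀ hu0] at hb
  rw [← div_eq_mul_inv, ← one_div, div_le_div_iff₀ hu0 hv0, div_mul_eq_mul_div,
    div_le_iff₀ (by positivity)]
  have e2 : 1 + 3 / 4 * (1 / ((n : ℝ) + 1)) = (n + 7 / 4) / (n + 1) := by field_simp; ring
  rw [e2, div_mul_eq_mul_div, le_div_iff₀ (by positivity)] at hb
  have h3 : ((n : ℝ) + 1 / 4) * (v * (n + 1)) ≤ (n + 1 / 4) * ((n + 7 / 4) * u) :=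
    mul_le_mul_of_nonneg_left hb (by positivity)
  have h4 : ((n : ℝ) + 1 / 4) * (v * (n + 1)) ≤ (u * (n + 1)) * (n + 1) := by nlinarith
  have hp : (0 : ℝ) < n + 1 := by positivity
  by_contra! hc
  nlinarith

lemma pp_bound (n K : ℕ) :
    ∑ k ∈ Finset.range K, |pp n k| * (1 / 4) ^ k ≤ ((n : ℝ) + 1) ^ (-(3 / 4) : ℝ) := by
  suffices h : ∀ K, ∑ k ∈ Finset.range (K + 1), |pp n k| * (1 / 4) ^ k
      ≤ ((n : ℝ) + 1) ^ (-(3 / 4) : ℝ) by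
    refine le_trans ?_ (h K)
    rw [Finset.sum_range_succ]
    have : 0 ≤ |pp n K| * (1 / 4) ^ K := by positivity
    linarith
  induction n with
  | zero =>
    intro K
    rw [Finset.sum_range_succ']
    simp [pp_zero]
  | succ n ih =>
    intro K
    have hp : (0 : ℝ) < n + 1 := by positivity
    have h1 : ∑ k ∈ Finset.range (K + 1), |pp (n + 1) k| * (1 / 4) ^ k ≤
        (n * (∑ k ∈ Finset.range (K + 1), |pp n k| * (1 / 4) ^ k) +
          1 / 4 * ∑ k ∈ Finset.range (K + 1), |pp n k| * (1 / 4) ^ k) / (n + 1) := by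
      rw [le_div_iff₀ hp]
      nth_rw 3 [Finset.sum_range_succ]
      rw [Finset.sum_range_succ', Finset.sum_range_succ', add_mul _ _ ((n : ℝ) + 1), Finset.sum_mul,
        mul_add (n : ℝ), mul_add (1 / 4 : ℝ), Finset.mul_sum, Finset.mul_sum]
      have h0 : |pp (n + 1) 0| * (1 / 4) ^ 0 * ((n : ℝ) + 1) = n * (|pp n 0| * (1 / 4) ^ 0) := by
        rw [pp_succ_zero, abs_div, abs_mul, abs_of_pos hp, Nat.abs_cast]
        field_simp
      have hle : ∑ i ∈ Finset.range K, |pp (n + 1) (i + 1)| * (1 / 4) ^ (i + 1) * ((n : ℝ) + 1) ≤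
          ∑ i ∈ Finset.range K, n * (|pp n (i + 1)| * (1 / 4) ^ (i + 1)) +
          ∑ i ∈ Finset.range K, 1 / 4 * (|pp n i| * (1 / 4) ^ i) := by
        rw [← Finset.sum_add_distrib]
        apply Finset.sum_le_sum
        intro i _
        rw [pp_succ_succ, abs_div, abs_of_pos hp]
        have := abs_sub (n * pp n (i + 1)) (pp n i)
        rw [abs_mul, Nat.abs_cast] at this
        have h5 := mul_le_mul_of_nonneg_right this (by positivity : (0 : ℝ) ≤ (1 / 4) ^ (i + 1))
        have e : |n * pp n (i + 1) - pp n i| / ((n : ℝ) + 1) * (1 / 4) ^ (i + 1) * (n + 1) =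
          |n * pp n (i + 1) - pp n i| * (1 / 4) ^ (i + 1) := by field_simp
        rw [e]
        refine h5.trans (le_of_eq ?_)
        ring
      have h6 : 0 ≤ 1 / 4 * (|pp n K| * (1 / 4) ^ K) := by positivity
      linarith
    refine h1.trans ?_
    have h2 := pp_step n
    push_cast
    rw [show (n : ℝ) + 1 + 1 = n + 2 by ring]
    refine le_trans ?_ h2
    rw [← add_mul, div_mul_eq_mul_div]
    gcongr
    exact ih K

/-- differences. -/
noncomputable def qq (n k : ℕ) : ℝ := pp n k - pp (n + 1) k

lemma qq_bound (n K : ℕ) :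
    ∑ k ∈ Finset.range K, |qq n k| * (1 / 4) ^ k
      ≤ 5 / 4 * ((n : ℝ) + 1) ^ (-(3 / 4) : ℝ) / (n + 1) := by
  suffices h : ∀ K, ∑ k ∈ Finset.range (K + 1), |qq n k| * (1 / 4) ^ k
      ≤ 5 / 4 * ((n : ℝ) + 1) ^ (-(3 / 4) : ℝ) / (n + 1) by
    refine le_trans ?_ (h K)
    rw [Finset.sum_range_succ]
    have : 0 ≤ |qq n K| * (1 / 4) ^ K := by positivity
    linarith
  intro K
  have hp : (0 : ℝ) < n + 1 := by positivity
  rw [le_div_iff₀ hp]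
  have b1 := pp_bound n (K + 1)
  have b2 := pp_bound n K
  rw [Finset.sum_range_succ'] at b1 ⊢
  rw [add_mul, Finset.sum_mul]
  have h0 : |qq n 0| * (1 / 4) ^ 0 * ((n : ℝ) + 1) = |pp n 0| * (1 / 4) ^ 0 := by
    have : qq n 0 = pp n 0 / (n + 1) := by rw [qq, pp_succ_zero]; field_simp; ring
    rw [this, abs_div, abs_of_pos hp]
    field_simp
  have hle : ∑ i ∈ Finset.range K, |qq n (i + 1)| * (1 / 4) ^ (i + 1) * ((n : ℝ) + 1) ≤
      ∑ i ∈ Finset.range K, (|pp n (i + 1)| * (1 / 4) ^ (i + 1)) +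
      1 / 4 * ∑ i ∈ Finset.range K, (|pp n i| * (1 / 4) ^ i) := by
    rw [Finset.mul_sum, ← Finset.sum_add_distrib]
    apply Finset.sum_le_sum
    intro i _
    have : qq n (i + 1) = (pp n (i + 1) + pp n i) / (n + 1) := by
      rw [qq, pp_succ_succ]; field_simp; ring
    rw [this, abs_div, abs_of_pos hp]
    have h5 := mul_le_mul_of_nonneg_right (abs_add_le (pp n (i + 1)) (pp n i))
      (by positivity : (0 : ℝ) ≤ (1 / 4) ^ (i + 1))
    have e : |pp n (i + 1) + pp n i| / ((n : ℝ) + 1) * (1 / 4) ^ (i + 1) * (n + 1) =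
      |pp n (i + 1) + pp n i| * (1 / 4) ^ (i + 1) := by field_simp
    rw [e]
    refine h5.trans (le_of_eq ?_)
    ring
  linarith

/-- partial sums of `laguerreOne`. -/
noncomputable def TT (n : ℕ) : ℝ := - (lag n).derivative.eval 1

lemma TT_bound (n : ℕ) : |TT n| ≤ Real.exp 1 * Real.sqrt n := by
  rw [TT, abs_neg]; exact lag_deriv_bound n

lemma dbl_summable : Summable (fun p : ℕ × ℕ => |qq p.1 p.2 * TT (p.1 + 1)| * (1 / 4) ^ p.2) := by
  have hb : ∀ n K : ℕ, ∑ k ∈ Finset.range K, |qq n k * TT (n + 1)| * (1 / 4) ^ k ≤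
      5 / 4 * Real.exp 1 * ((n + 1 : ℕ) : ℝ) ^ (-(5 / 4) : ℝ) := by
    intro n K
    have hp : (0 : ℝ) < n + 1 := by positivity
    have e : ∑ k ∈ Finset.range K, |qq n k * TT (n + 1)| * (1 / 4) ^ k =
        (∑ k ∈ Finset.range K, |qq n k| * (1 / 4) ^ k) * |TT (n + 1)| := by
      rw [Finset.sum_mul]
      refine Finset.sum_congr rfl fun k _ => ?_
      rw [abs_mul]; ring
    rw [e]
    have := mul_le_mul (qq_bound n K) (TT_bound (n + 1)) (abs_nonneg _) (by positivity)
    refine this.trans (le_of_eq ?_)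
    push_cast
    rw [Real.sqrt_eq_rpow]
    have e2 : ((n : ℝ) + 1) ^ (-(5 / 4) : ℝ) =
        ((n : ℝ) + 1) ^ (-(3 / 4) : ℝ) * (n + 1) ^ (1 / 2 : ℝ) / (n + 1) := by
      rw [← Real.rpow_add hp, ← Real.rpow_sub_one hp.ne']; norm_num
    rw [e2]; ring
  have hs : ∀ n : ℕ, Summable (fun k => |qq n k * TT (n + 1)| * (1 / 4) ^ k) := fun n =>
    summable_of_sum_range_le (fun k => by positivity) (hb n)
  rw [summable_prod_of_nonneg (fun p => by positivity)]
  refine ⟨hs, ?_⟩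
  refine Summable.of_nonneg_of_le (fun n => tsum_nonneg fun k => by positivity)
    (fun n => Real.tsum_le_of_sum_range_le (fun k => by positivity) (hb n)) ?_
  apply Summable.mul_left
  exact (summable_nat_add_iff 1).2 (Real.summable_nat_rpow.2 (by norm_num))

/-- the Taylor coefficients. -/
noncomputable def aa (k : ℕ) : ℝ := ∑' n, qq n k * TT (n + 1)

lemma aa_summable (k : ℕ) : Summable (fun n => qq n k * TT (n + 1)) := by
  have h : Summable (fun n => |qq n k * TT (n + 1)| * (1 / 4) ^ k) :=
    dbl_summable.comp_injective (i := fun n : ℕ => (n, k)) (fun a b h => (Prod.ext_iff.1 h).1)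
  have h2 := h.mul_right (4 ^ k)
  refine (h2.congr fun n => ?_).of_abs
  rw [mul_assoc, ← mul_pow]; norm_num

lemma aa_tendsto (k : ℕ) : Filter.Tendsto
    (fun N => ∑ n ∈ Finset.range N,
      (-1) ^ n * stirlingFirst n k * laguerreOne n / (Nat.factorial n : ℝ))
    Filter.atTop (nhds (aa k)) := by
  have e : ∀ N, ∑ n ∈ Finset.range N,
      (-1) ^ n * stirlingFirst n k * laguerreOne n / (Nat.factorial n : ℝ) =
      ∑ n ∈ Finset.range N, qq n k * TT (n + 1) + pp N k * TT N := by
    intro N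
    induction N with
    | zero => simp [TT, lag_zero]
    | succ N ih =>
      rw [Finset.sum_range_succ, Finset.sum_range_succ, ih]
      have h1 : TT (N + 1) = TT N + laguerreOne N := by
        rw [TT, TT, ← lag_deriv_sum, ← lag_deriv_sum, Finset.sum_range_succ]
      rw [h1, qq]
      have h2 : (-1) ^ N * stirlingFirst N k * laguerreOne N / (Nat.factorial N : ℝ) =
        pp N k * laguerreOne N := by rw [pp]; ring
      rw [h2]; ring
  simp_rw [e]
  rw [← add_zero (aa k)]
  apply (aa_summable k).hasSum.tendsto_sum_nat.add
  have hlim : Filter.Tendsto (fun N : ℕ => 4 ^ k * Real.exp 1 * ((N : ℝ) + 1) ^ (-(1 / 4) : ℝ))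
      Filter.atTop (nhds 0) := by
    have h1 : Filter.Tendsto (fun N : ℕ => ((N : ℝ) + 1)) Filter.atTop Filter.atTop :=
      Filter.tendsto_atTop_add_const_right _ _ tendsto_natCast_atTop_atTop
    have h2 := (tendsto_rpow_neg_atTop (y := 1 / 4) (by norm_num)).comp h1
    have h3 := h2.const_mul (4 ^ k * Real.exp 1)
    rw [mul_zero] at h3
    exact h3
  refine squeeze_zero_norm (fun N => ?_) hlim
  rw [Real.norm_eq_abs, abs_mul]
  have hp : (0 : ℝ) < N + 1 := by positivity
  have h1 : |pp N k| * (1 / 4) ^ k ≤ ((N : ℝ) + 1) ^ (-(3 / 4) : ℝ) := by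
    refine le_trans ?_ (pp_bound N (k + 1))
    exact Finset.single_le_sum (f := fun k => |pp N k| * (1 / 4 : ℝ) ^ k)
      (fun i _ => by positivity) (Finset.self_mem_range_succ k)
  have h2 : |pp N k| ≤ 4 ^ k * ((N : ℝ) + 1) ^ (-(3 / 4) : ℝ) := by
    have := mul_le_mul_of_nonneg_left h1 (by positivity : (0 : ℝ) ≤ 4 ^ k)
    refine le_trans (le_of_eq ?_) this
    rw [mul_comm, mul_assoc, ← mul_pow]; norm_num
  have h3 : |TT N| ≤ Real.exp 1 * ((N : ℝ) + 1) ^ (1 / 2 : ℝ) := by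
    refine (TT_bound N).trans ?_
    rw [← Real.sqrt_eq_rpow]
    gcongr
    linarith
  refine (mul_le_mul h2 h3 (abs_nonneg _) (by positivity)).trans (le_of_eq ?_)
  have e2 : ((N : ℝ) + 1) ^ (-(1 / 4) : ℝ) =
      ((N : ℝ) + 1) ^ (-(3 / 4) : ℝ) * (N + 1) ^ (1 / 2 : ℝ) := by
    rw [← Real.rpow_add hp]; norm_num
  rw [e2]; ring

lemma aa_abs_summable : Summable (fun k => |aa k| * (1 / 4) ^ k) := by
  have h := (dbl_summable.prod_symm).prod
  refine Summable.of_nonneg_of_le (fun k => by positivity) (fun k => ?_) h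
  simp only [Prod.fst_swap, Prod.snd_swap]
  rw [tsum_mul_right]
  apply mul_le_mul_of_nonneg_right _ (by positivity)
  exact norm_tsum_le_tsum_norm (aa_summable k).norm

lemma aa_hasSum (x : ℝ) (h0 : 0 < x) (h1 : x < 1 / 4) :
    HasSum (fun k => aa k * x ^ k) (1 / Real.Gamma (x + 1)) := by
  have hs : Summable (fun p : ℕ × ℕ => qq p.1 p.2 * TT (p.1 + 1) * x ^ p.2) := by
    refine Summable.of_norm_bounded dbl_summable (fun p => ?_)
    rw [norm_mul, norm_pow, Real.norm_eq_abs, Real.norm_eq_abs, abs_of_pos h0]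
    gcongr
  have hv := main_value x h0 (by linarith)
  have hn : ∀ n, HasSum (fun k => qq n k * TT (n + 1) * x ^ k)
      ((cc x n - cc x (n + 1)) * (-(lag (n + 1)).derivative.eval 1)) := by
    intro n
    refine (((pp_hasSum x n).sub (pp_hasSum x (n + 1))).mul_right (TT (n + 1))).congr_fun
      (fun k => ?_)
    rw [qq]; ring
  have ht := (hs.hasSum.prod_fiberwise hn).unique hv
  have hs2 := hs.hasSum
  rw [ht] at hs2
  have hs3 := (Equiv.prodComm ℕ ℕ).hasSum_iff.2 hs2
  refine hs3.prod_fiberwise (fun k => ?_)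
  exact (aa_summable k).hasSum.mul_right (x ^ k)

lemma final (x : ℝ) (hx : 0 < x) :
    HasSum (fun k => aa k * x ^ k) (1 / Real.Gamma (x + 1)) := by
  -- the convergent series near zero
  set A : FormalMultilinearSeries ℂ ℂ ℂ :=
    FormalMultilinearSeries.ofScalars ℂ (fun k => (aa k : ℂ)) with hA
  have hr : ((1 / 4 : NNReal) : ENNReal) ≤ A.radius := by
    apply A.le_radius_of_summable
    refine aa_abs_summable.congr (fun k => ?_)
    rw [hA, FormalMultilinearSeries.ofScalars_norm]
    simp
  have hpos : 0 < A.radius := lt_of_lt_of_le (by simp) hr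
  have hfA := (A.hasFPowerSeriesOnBall hpos).hasFPowerSeriesAt
  -- the entire function
  set h : ℂ → ℂ := fun z => (Complex.Gamma (z + 1))⁻¹ with hh
  have hd : Differentiable ℂ h :=
    Complex.differentiable_one_div_Gamma.comp (differentiable_id.add_const 1)
  have hB := hd.hasFPowerSeriesOnBall 0 (R := 1) one_pos
  set B := cauchyPowerSeries h 0 (1 : NNReal)
  have hval : ∀ y : ℝ, h y = ((1 / Real.Gamma (y + 1) : ℝ) : ℂ) := by
    intro y
    simp only [hh]
    rw [one_div, Complex.ofReal_inv, ← Complex.Gamma_ofReal]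
    push_cast; rfl
  have hfreq : ∃ᶠ z in nhdsWithin (0 : ℂ) {0}ᶜ, A.sum z = h z := by
    have htend : Filter.Tendsto (fun y : ℝ => (y : ℂ)) (nhdsWithin 0 (Set.Ioi 0))
        (nhdsWithin (0 : ℂ) {0}ᶜ) := by
      apply tendsto_nhdsWithin_iff.2
      constructor
      · have : Filter.Tendsto (fun y : ℝ => (y : ℂ)) (nhds 0) (nhds ((0 : ℝ) : ℂ)) :=
          Complex.continuous_ofReal.tendsto 0
        simpa using this.mono_left nhdsWithin_le_nhds
      · filter_upwards [self_mem_nhdsWithin] with y hy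
        have : y ≠ 0 := ne_of_gt hy
        simpa using this
    apply htend.frequently
    apply Filter.Eventually.frequently
    filter_upwards [Ioo_mem_nhdsGT (show (0 : ℝ) < 1 / 4 by norm_num)] with y hy
    rw [hval, hA]
    have h1 := aa_hasSum y hy.1 hy.2
    have h2 := Complex.hasSum_ofReal.2 h1
    rw [← h2.tsum_eq]
    have := FormalMultilinearSeries.ofScalars_sum_eq (E := ℂ) (fun k => (aa k : ℂ)) (y : ℂ)
    rw [FormalMultilinearSeries.ofScalarsSum] at this
    rw [this]
    simp
  have heq := (hfA.analyticAt.frequently_eq_iff_eventually_eq hB.analyticAt).1 hfreq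
  have hAB : A = B := (hfA.congr heq).eq_formalMultilinearSeries hB.hasFPowerSeriesAt
  have hsum := hB.hasSum (y := (x : ℂ)) (by simp)
  rw [← hAB, zero_add, hval] at hsum
  rw [← Complex.hasSum_ofReal]
  refine hsum.congr_fun (fun k => ?_)
  simp [hA, mul_comm]

theorem reciprocal_gamma_taylor_series :
    ∃ a : ℕ → ℝ,
      (∀ k : ℕ,
        Filter.Tendsto
          (fun N => ∑ n ∈ Finset.range N,
            (-1) ^ n * stirlingFirst n k * laguerreOne n / (Nat.factorial n : ℝ))
          Filter.atTop (nhds (a k))) ∧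
      (∀ x : ℝ, 0 < x →
        Filter.Tendsto (fun K => ∑ k ∈ Finset.range K, a k * x ^ k)
          Filter.atTop (nhds (1 / Real.Gamma (x + 1)))) := by
  exact ⟨aa, aa_tendsto, fun x hx => (final x hx).tendsto_sum_nat⟩
end

section
/- The series ∑_{n=1}^∞ L_n(1)/n converges and its sum equals -γ, where γ is the Euler–Mascheroni constant. -/
/-- `n (L_n(1) - L_{n-1}(1))`. -/
noncomputable def lagD (n : ℕ) : ℝ :=
  -∑ j ∈ Finset.range (n + 1), (Nat.choose n (j+1) : ℝ) * (-1) ^ j / (Nat.factorial j : ℝ)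

lemma lagD_succ (n : ℕ) : lagD (n+1) = lagD n - laguerreOne n := by
  unfold lagD laguerreOne
  rw [Finset.sum_range_succ]
  simp only [Nat.choose_succ_succ, Nat.cast_add, add_mul, add_div, Finset.sum_add_distrib]
  have h1 : n.choose (n+1+1) = 0 := Nat.choose_eq_zero_of_lt (by omega)
  simp [h1]
  ring

lemma lag_succ (n : ℕ) : laguerreOne (n+1) = laguerreOne n + lagD (n+1) / (n+1) := by
  unfold lagD laguerreOne
  rw [Finset.sum_range_succ', Finset.sum_range_succ _ (n+1), Finset.sum_range_succ' (fun k => (n.choose k : ℝ) * (-1) ^ k / (k.factorial : ℝ)) n]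
  have h : ∀ j, ((n+1).choose (j+1) : ℝ) * (-1)^(j+1) / ((j+1).factorial : ℝ)
      = (n.choose (j+1) : ℝ) * (-1)^(j+1) / ((j+1).factorial : ℝ)
       - ((n+1).choose (j+1) : ℝ) * (-1)^j / (j.factorial : ℝ) / (n+1) := by
    intro j
    have h1 : ((n:ℝ)+1) * (n.choose j : ℝ) = ((n+1).choose (j+1) : ℝ) * (j+1) := by
      exact_mod_cast Nat.add_one_mul_choose_eq n j
    have h2 : ((n+1).choose (j+1) : ℝ) = n.choose j + n.choose (j+1) := by
      exact_mod_cast Nat.choose_succ_succ n j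
    have h3 : (j.factorial : ℝ) ≠ 0 := by positivity
    have h4 : ((n:ℝ)+1) ≠ 0 := by positivity
    have h5 : ((j:ℝ)+1) ≠ 0 := by positivity
    have h6 : (n.choose (j+1) : ℝ) = ((n+1).choose (j+1) : ℝ) - ((n+1).choose (j+1) : ℝ) * (j+1) / (n+1) := by
      rw [← h1, h2]; field_simp; ring
    rw [h6, Nat.factorial_succ]
    push_cast
    field_simp
    ring
  rw [Finset.sum_congr rfl (fun j _ => h j), Finset.sum_sub_distrib, Finset.sum_range_succ _ n, ← Finset.sum_div]
  simp
  ring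

lemma lag_energy_s3 (n : ℕ) : laguerreOne (n+1)^2 - laguerreOne (n+1) * lagD (n+1) / (n+1)
    + lagD (n+1)^2/(n+1) ≤ 2 - 1/(n+1) := by
  induction n with
  | zero => simp [laguerreOne, lagD, Finset.sum_range_succ]; norm_num
  | succ n ih =>
    rw [lag_succ (n+1), lagD_succ (n+1)]
    set x := laguerreOne (n+1)
    set y := lagD (n+1)
    push_cast
    have hn : (0:ℝ) ≤ n := by positivity
    generalize (n:ℝ) = a at *
    set h := 1/(a+1) with hh
    set k := 1/(a+1+1) with hk
    have hk0 : 0 < k := by positivity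
    have h0 : 0 < h := by positivity
    have h1 : h ≤ 1 := by rw [hh, div_le_one (by positivity)]; linarith
    have hhk : h - k = h * k := by rw [hh, hk]; field_simp; ring
    have e1 : x^2 - x*y/(a+1) + y^2/(a+1) = x^2 - h*(x*y) + h*y^2 := by rw [hh]; ring
    have e2 : (x + (y-x)/(a+1+1))^2 - (x+(y-x)/(a+1+1))*(y-x)/(a+1+1) + (y-x)^2/(a+1+1)
       = x^2 - k*(x*y) + k*y^2 := by rw [hk]; ring
    rw [e1] at ih
    rw [e2]
    have hx : 3/4 * x^2 ≤ 2 := by nlinarith [mul_nonneg h0.le (sq_nonneg (y - x/2)), sq_nonneg x]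
    have : h*k*(y^2 - x*y + 1) ≥ 0 := by
      apply mul_nonneg (by positivity)
      nlinarith [sq_nonneg (y-x/2)]
    nlinarith

lemma lag_bound_s3 (n : ℕ) : |laguerreOne n| ≤ 2 := by
  rcases n with _ | n
  · simp [laguerreOne]
  apply abs_le_of_sq_le_sq _ (by norm_num)
  have ih := lag_energy_s3 n
  set x := laguerreOne (n+1)
  set y := lagD (n+1)
  have hn : (0:ℝ) ≤ n := by positivity
  generalize (n:ℝ) = a at *
  set h := 1/(a+1) with hh
  have h0 : 0 < h := by positivity
  have h1 : h ≤ 1 := by rw [hh, div_le_one (by positivity)]; linarith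
  have e1 : x^2 - x*y/(a+1) + y^2/(a+1) = x^2 - h*(x*y) + h*y^2 := by rw [hh]; ring
  rw [e1] at ih
  nlinarith [mul_nonneg h0.le (sq_nonneg (y - x/2)), sq_nonneg x]

lemma lagD_bound_s3 (n : ℕ) : |lagD (n+1)| ≤ 2 * √(n+1) := by
  apply abs_le_of_sq_le_sq _ (by positivity)
  rw [mul_pow, Real.sq_sqrt (by positivity)]
  have ih := lag_energy_s3 n
  set x := laguerreOne (n+1)
  set y := lagD (n+1)
  have hn : (0:ℝ) ≤ n := by positivity
  generalize (n:ℝ) = a at *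
  set h := 1/(a+1) with hh
  have h0 : 0 < h := by positivity
  have h1 : h ≤ 1 := by rw [hh, div_le_one (by positivity)]; linarith
  have e1 : x^2 - x*y/(a+1) + y^2/(a+1) = x^2 - h*(x*y) + h*y^2 := by rw [hh]; ring
  rw [e1] at ih
  have : h * y^2 ≤ 4 := by
    nlinarith [sq_nonneg (x - h*y/2), mul_nonneg (mul_nonneg h0.le (sub_nonneg.2 h1)) (sq_nonneg y)]
  have e3 : y^2 = (h*y^2)*(a+1) := by rw [hh]; field_simp
  rw [e3]; nlinarith

lemma lag_conv : ∃ S, Filter.Tendsto (fun N => ∑ n ∈ Finset.range N, laguerreOne n / (n : ℝ))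
      Filter.atTop (nhds S) := by
  have hs : Summable (fun n : ℕ => lagD (n+2) / (((n:ℝ)+1) * (n+2))) := by
    have h0 : Summable (fun n : ℕ => 2 * (1 / ((n+1:ℕ):ℝ) ^ (3/2:ℝ))) :=
      (((summable_nat_add_iff 1).2 (Real.summable_one_div_nat_rpow.2 (by norm_num : (1:ℝ) < 3/2)))).mul_left 2
    refine Summable.of_norm_bounded h0 (fun n => ?_)
    have hb := lagD_bound_s3 (n+1)
    have hpos : (0:ℝ) < (n:ℝ)+1 := by positivity
    rw [norm_div, Real.norm_eq_abs, Real.norm_of_nonneg (by positivity)]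
    have e : (((n+1:ℕ):ℝ) ^ (3/2:ℝ)) = (n+1) * √((n:ℝ)+1) := by
      rw [show (3/2:ℝ) = 1 + 1/2 by norm_num, Real.rpow_add (by positivity), Real.rpow_one, ← Real.sqrt_eq_rpow]
      push_cast; rfl
    rw [e]
    push_cast at hb
    have e2 : (n:ℝ)+2 = √((n:ℝ)+1+1) * √((n:ℝ)+1+1) := by
      rw [Real.mul_self_sqrt (by positivity)]; ring
    rw [div_le_iff₀ (by positivity)]
    refine hb.trans ?_
    have hm : √((n:ℝ)+1) ≤ √((n:ℝ)+1+1) := Real.sqrt_le_sqrt (by linarith)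
    have hp : 0 < √((n:ℝ)+1) := Real.sqrt_pos.2 hpos
    rw [e2]
    have : 2 * (1 / (((n:ℝ)+1) * √((n:ℝ)+1))) * (((n:ℝ)+1) * (√((n:ℝ)+1+1) * √((n:ℝ)+1+1)))
       = 2 * √((n:ℝ)+1+1) * (√((n:ℝ)+1+1) / √((n:ℝ)+1)) := by field_simp
    rw [this]
    apply le_mul_of_one_le_right (by positivity)
    rwa [one_le_div hp]
  have key : ∀ N : ℕ, ∑ n ∈ Finset.range (N+1), laguerreOne n / (n : ℝ) =
      lagD 1 - lagD (N+1) / (N+1) - ∑ n ∈ Finset.range N, lagD (n+2) / (((n:ℝ)+1) * (n+2)) := by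
    intro N
    induction N with
    | zero => simp
    | succ N ih =>
      rw [Finset.sum_range_succ, ih, Finset.sum_range_succ]
      have : laguerreOne (N+1) = lagD (N+1) - lagD (N+2) := by
        rw [lagD_succ (N+1)]; ring
      rw [this]
      push_cast
      field_simp
      ring
  have hD : Filter.Tendsto (fun N : ℕ => lagD (N+1) / ((N:ℝ)+1)) Filter.atTop (nhds 0) := by
    have h1 : Filter.Tendsto (fun N : ℕ => 2 * (√((N:ℝ)+1))⁻¹) Filter.atTop (nhds 0) := by
      have : Filter.Tendsto (fun N : ℕ => √((N:ℝ)+1)) Filter.atTop Filter.atTop :=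
        Real.tendsto_sqrt_atTop.comp
          (Filter.tendsto_atTop_add_const_right _ _ tendsto_natCast_atTop_atTop)
      simpa using this.inv_tendsto_atTop.const_mul 2
    refine squeeze_zero_norm (fun n => ?_) h1
    rw [norm_div, Real.norm_eq_abs, Real.norm_of_nonneg (by positivity), div_le_iff₀ (by positivity)]
    refine (lagD_bound_s3 n).trans (le_of_eq ?_)
    have hp : 0 < √((n:ℝ)+1) := Real.sqrt_pos.2 (by positivity)
    field_simp
    rw [Real.sq_sqrt (by positivity)]
  refine ⟨lagD 1 - 0 - ∑' n : ℕ, lagD (n+2) / (((n:ℝ)+1) * (n+2)),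
    (Filter.tendsto_add_atTop_iff_nat 1).1 ?_⟩
  · simp_rw [key]
    exact (hD.const_sub _).sub hs.hasSum.tendsto_sum_nat

lemma integral_log_exp : MeasureTheory.IntegrableOn (fun t => Real.log t * Real.exp (-t)) (Set.Ioi 0) ∧
    ∫ t in Set.Ioi (0:ℝ), Real.log t * Real.exp (-t) = -Real.eulerMascheroniConstant := by
  have h : ∫ t in Set.Ioi (0:ℝ), Real.log t * Real.exp (-t) = -Real.eulerMascheroniConstant := by
    have h1 := Complex.hasDerivAt_GammaIntegral (s := 1) (by simp)
    have h2 : HasDerivAt Complex.Gamma (∫ t : ℝ in Set.Ioi 0, (t:ℂ) ^ ((1:ℂ) - 1) * (Real.log t * Real.exp (-t))) 1 := by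
      apply h1.congr_of_eventuallyEq
      have : IsOpen {s : ℂ | 0 < s.re} := isOpen_lt continuous_const Complex.continuous_re
      filter_upwards [this.mem_nhds (show (1:ℂ) ∈ {s : ℂ | 0 < s.re} by simp)] with s hs
      exact Complex.Gamma_eq_integral hs
    have h3 := h2.unique Complex.hasDerivAt_Gamma_one
    simp only [sub_self, Complex.cpow_zero, one_mul] at h3
    simp only [← Complex.ofReal_mul, ← Complex.ofReal_neg] at h3
    rw [integral_complex_ofReal] at h3
    exact_mod_cast h3
  refine ⟨?_, h⟩
  by_contra hc
  have := MeasureTheory.integral_undef hc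
  rw [h] at this
  linarith [Real.one_half_lt_eulerMascheroniConstant]

lemma choose_hasSum (k : ℕ) {t : ℝ} (h0 : 0 ≤ t) (h1 : t < 1) :
    HasSum (fun n : ℕ => (n.choose k : ℝ) * t ^ n) (t^k / (1-t)^(k+1)) := by
  have h := (hasSum_choose_mul_geometric_of_norm_lt_one k
    (r := t) (by rwa [Real.norm_of_nonneg h0])).mul_left (t^k)
  rw [← (add_left_injective k).hasSum_iff]
  · convert! h using 1
    · ext n; simp only [Function.comp, pow_add]; ring
    · ring
  · intro n hn
    have : n < k := by
      by_contra hc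
      exact hn ⟨n - k, by simp; omega⟩
    simp [Nat.choose_eq_zero_of_lt this]

lemma lag_summable {t : ℝ} (h0 : 0 ≤ t) (h1 : t < 1) :
    Summable (fun n : ℕ => laguerreOne n * t ^ n) := by
  refine Summable.of_norm_bounded ((summable_geometric_of_lt_one h0 h1).mul_left 2) (fun n => ?_)
  rw [norm_mul, Real.norm_eq_abs, Real.norm_of_nonneg (by positivity)]
  exact mul_le_mul_of_nonneg_right (lag_bound_s3 n) (by positivity)

lemma lag_gen {t : ℝ} (h0 : 0 ≤ t) (h1 : t < 1) :
    ∑' n : ℕ, laguerreOne n * t ^ n = 1/(1-t) * Real.exp (-(t/(1-t))) := by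
  have ht : 0 < 1 - t := by linarith
  let F : ℕ → ℕ → ℝ := fun k n => (-1)^k / (k.factorial : ℝ) * ((n.choose k : ℝ) * t ^ n)
  have hF : ∀ k, HasSum (F k) ((-1)^k / (k.factorial : ℝ) * (t^k / (1-t)^(k+1))) :=
    fun k => (choose_hasSum k h0 h1).mul_left _
  have hA : ∀ k, HasSum (fun n => |F k n|) (1 / (k.factorial : ℝ) * (t^k / (1-t)^(k+1))) := by
    intro k
    convert! (choose_hasSum k h0 h1).mul_left (1 / (k.factorial : ℝ)) using 1
    ext n
    simp only [F]
    rw [abs_mul, abs_div, abs_pow, abs_neg, abs_one, one_pow,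
      abs_of_nonneg (show 0 ≤ (n.choose k : ℝ) * t ^ n by positivity), Nat.abs_cast]
  have hE : ∀ x : ℝ, HasSum (fun k : ℕ => x^k / (k.factorial : ℝ)) (Real.exp x) := by
    intro x
    rw [Real.exp_eq_exp_ℝ]
    exact NormedSpace.expSeries_div_hasSum_exp x
  have hsum : Summable (Function.uncurry F) := by
    apply Summable.of_abs
    rw [summable_prod_of_nonneg (fun _ => abs_nonneg _)]
    refine ⟨fun k => (hA k).summable, ?_⟩
    have := ((hE (t/(1-t))).mul_left (1/(1-t))).summable
    refine this.congr (fun k => ?_)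
    refine Eq.trans ?_ (hA k).tsum_eq.symm
    rw [div_pow, pow_succ]
    field_simp
  have hc := hsum.tsum_comm
  have hl : ∀ n, ∑' k, F k n = laguerreOne n * t^n := by
    intro n
    rw [tsum_eq_sum (s := Finset.range (n+1))]
    · rw [laguerreOne, Finset.sum_mul]
      refine Finset.sum_congr rfl (fun k _ => ?_)
      simp only [F]; ring
    · intro k hk
      have : n < k := by simpa using hk
      simp [F, Nat.choose_eq_zero_of_lt this]
  simp_rw [hl] at hc
  rw [hc]
  refine Eq.trans ?_ ((hE (-(t/(1-t)))).mul_left (1/(1-t))).tsum_eq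
  refine tsum_congr (fun k => ?_)
  rw [(hF k).tsum_eq, neg_pow (t/(1-t)), div_pow, pow_succ]
  field_simp

/-- The Abel generating function of the series. -/
noncomputable def lagF (t : ℝ) : ℝ := ∑' n : ℕ, laguerreOne n / (n:ℝ) * t ^ n

lemma lagF_deriv {t : ℝ} (ht : |t| < 1) :
    HasDerivAt lagF (∑' n : ℕ, laguerreOne n / (n:ℝ) * (n * t ^ (n-1))) t := by
  obtain ⟨r, hr1, hr2⟩ := exists_between ht
  have hr0 : 0 ≤ r := (abs_nonneg t).trans hr1.le
  have hu : Summable (fun n : ℕ => 2 * r ^ (n-1)) := by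
    rw [← summable_nat_add_iff 1]
    simpa using (summable_geometric_of_lt_one hr0 hr2).mul_left 2
  refine hasDerivAt_tsum_of_isPreconnected (t := Set.Ioo (-r) r) (y₀ := 0)
    (g := fun n y => laguerreOne n / (n:ℝ) * y ^ n)
    (g' := fun n y => laguerreOne n / (n:ℝ) * (n * y ^ (n-1))) hu
    isOpen_Ioo isPreconnected_Ioo ?_ ?_ ?_ ?_ ?_
  · intro n y _
    exact (hasDerivAt_pow n y).const_mul _
  · intro n y hy
    have hy' : |y| ≤ r := abs_le.2 ⟨hy.1.le, hy.2.le⟩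
    rcases n with _ | n
    · simp
    · have : laguerreOne (n+1) / ((n+1:ℕ):ℝ) * (((n+1:ℕ):ℝ) * y ^ (n+1-1)) = laguerreOne (n+1) * y^n := by
        have : ((n+1:ℕ):ℝ) ≠ 0 := by positivity
        field_simp
        simp
      rw [this, norm_mul, norm_pow, Real.norm_eq_abs, Real.norm_eq_abs]
      simp only [Nat.add_sub_cancel]
      exact mul_le_mul (lag_bound_s3 _) (pow_le_pow_left₀ (abs_nonneg _) hy' n) (by positivity) (by norm_num)
  · have := (abs_nonneg t).trans_lt hr1
    exact ⟨by linarith, this⟩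
  · refine summable_of_ne_finset_zero (s := {0}) ?_
    intro n hn
    have : n ≠ 0 := by simpa using hn
    simp [this]
  · exact abs_lt.1 hr1

lemma lagF_deriv' {t : ℝ} (h0 : 0 < t) (h1 : t < 1) :
    HasDerivAt lagF ((1/(1-t) * Real.exp (-(t/(1-t))) - 1) / t) t := by
  convert lagF_deriv (t := t) (by rwa [abs_of_pos h0]) using 1
  rw [← lag_gen h0.le h1, div_eq_iff h0.ne', ← tsum_mul_right]
  have hs := lag_summable h0.le h1
  have e : ∀ n : ℕ, laguerreOne n / (n:ℝ) * (n * t ^ (n-1)) * t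
      = if n = 0 then 0 else laguerreOne n * t^n := by
    intro n
    rcases n with _ | n
    · simp
    · have : ((n+1:ℕ):ℝ) ≠ 0 := by positivity
      simp only [Nat.add_sub_cancel, Nat.succ_ne_zero, if_false]
      field_simp
      ring
  simp_rw [e]
  rw [hs.tsum_eq_add_tsum_ite 0]
  simp [laguerreOne]

/-- The closed form of the Abel sum in the variable `u = t / (1 - t)`. -/
noncomputable def lagA (u : ℝ) : ℝ :=
  Real.log (u + 1) - (1 - Real.exp (-u)) * Real.log u + ∫ s in (0:ℝ)..u, Real.log s * Real.exp (-s)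

lemma log_exp_ii (a b : ℝ) :
    IntervalIntegrable (fun s => Real.log s * Real.exp (-s)) MeasureTheory.volume a b :=
  intervalIntegral.intervalIntegrable_log'.mul_continuousOn (by fun_prop)

lemma lagA_deriv {u : ℝ} (hu : 0 < u) :
    HasDerivAt lagA ((Real.exp (-u) - 1/(1+u)) / u) u := by
  have h1 : HasDerivAt (fun u : ℝ => ∫ s in (0:ℝ)..u, Real.log s * Real.exp (-s))
      (Real.log u * Real.exp (-u)) u := by
    apply intervalIntegral.integral_hasDerivAt_right (log_exp_ii _ _)
    · apply Measurable.stronglyMeasurable _ |>.stronglyMeasurableAtFilter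
      fun_prop
    · exact (Real.continuousAt_log hu.ne').mul (by fun_prop)
  have h2 : HasDerivAt (fun u : ℝ => Real.exp (-u)) (-Real.exp (-u)) u := by
    simpa using (hasDerivAt_neg u).exp
  have h3 : HasDerivAt (fun u : ℝ => Real.log (u+1)) (1/(u+1)) u :=
    ((hasDerivAt_id u).add_const 1).log (by simp; linarith)
  refine ((h3.sub ((h2.const_sub 1).mul (Real.hasDerivAt_log hu.ne'))).add h1).congr_deriv ?_
  have : u + 1 ≠ 0 := by linarith
  have : 1 + u ≠ 0 := by linarith
  field_simp
  ring

lemma lagA_zero : Filter.Tendsto lagA (nhdsWithin 0 (Set.Ioi 0)) (nhds 0) := by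
  have h1 : Filter.Tendsto (fun u : ℝ => Real.log (u+1)) (nhdsWithin 0 (Set.Ioi 0)) (nhds 0) := by
    have : ContinuousAt (fun u : ℝ => Real.log (u+1)) 0 := by
      apply ContinuousAt.log (by fun_prop) (by norm_num)
    simpa using this.tendsto.mono_left nhdsWithin_le_nhds
  have h2 : Filter.Tendsto (fun u : ℝ => ∫ s in (0:ℝ)..u, Real.log s * Real.exp (-s))
      (nhdsWithin 0 (Set.Ioi 0)) (nhds 0) := by
    have := (intervalIntegral.continuous_primitive log_exp_ii 0).tendsto 0
    simpa using this.mono_left nhdsWithin_le_nhds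
  have h3 : Filter.Tendsto (fun u : ℝ => (1 - Real.exp (-u)) * Real.log u)
      (nhdsWithin 0 (Set.Ioi 0)) (nhds 0) := by
    have h := (tendsto_log_mul_rpow_nhdsGT_zero zero_lt_one).norm
    simp only [norm_zero] at h
    refine squeeze_zero_norm' ?_ h
    filter_upwards [self_mem_nhdsWithin] with u hu
    have hu' : 0 < u := hu
    rw [Real.rpow_one, norm_mul, norm_mul, mul_comm]
    apply mul_le_mul_of_nonneg_left _ (norm_nonneg _)
    have e1 := Real.add_one_le_exp (-u)
    have e2 : Real.exp (-u) ≤ 1 := Real.exp_le_one_iff.2 (by linarith)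
    rw [Real.norm_of_nonneg (by linarith), Real.norm_of_nonneg hu'.le]
    linarith
  simpa using! (h1.sub h3).add h2

lemma lagA_top : Filter.Tendsto lagA Filter.atTop (nhds (-Real.eulerMascheroniConstant)) := by
  have h1 := Real.tendsto_log_comp_add_sub_log 1
  have h2 := MeasureTheory.intervalIntegral_tendsto_integral_Ioi 0 integral_log_exp.1 Filter.tendsto_id
  rw [integral_log_exp.2] at h2
  have h3 : Filter.Tendsto (fun u : ℝ => Real.exp (-u) * Real.log u) Filter.atTop (nhds 0) := by
    have h := Real.tendsto_pow_mul_exp_neg_atTop_nhds_zero 1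
    refine squeeze_zero' ?_ ?_ h
    · filter_upwards [Filter.eventually_ge_atTop 1] with u hu
      exact mul_nonneg (Real.exp_pos _).le (Real.log_nonneg hu)
    · filter_upwards [Filter.eventually_ge_atTop 1] with u hu
      rw [pow_one, mul_comm]
      exact mul_le_mul_of_nonneg_right (Real.log_le_self (by linarith)) (Real.exp_pos _).le
  have := (h1.add h3).add h2
  rw [add_zero, zero_add] at this
  refine this.congr (fun u => ?_)
  simp only [lagA, id]
  ring

lemma lagF_eq {u : ℝ} (hu : 0 < u) : lagF (u/(u+1)) = lagA u := by
  have hd : ∀ v ∈ Set.Ioi (0:ℝ), HasDerivAt (fun v => lagF (v/(v+1)) - lagA v) 0 v := by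
    intro v hv
    have hv : 0 < v := hv
    have hv1 : v + 1 ≠ 0 := by linarith
    have hv2 : 1 + v ≠ 0 := by linarith
    have h1 : HasDerivAt (fun v : ℝ => v/(v+1)) (1/(v+1)^2) v := by
      refine ((hasDerivAt_id v).div ((hasDerivAt_id v).add_const 1) hv1).congr_deriv ?_
      simp
    have h2 := (lagF_deriv' (t := v/(v+1)) (by positivity)
      (by rw [div_lt_one (by linarith)]; linarith)).comp v h1
    refine (h2.sub (lagA_deriv hv)).congr_deriv ?_
    have e1 : 1 - v/(v+1) = 1/(v+1) := by field_simp; ring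
    have e2 : v/(v+1)/(1/(v+1)) = v := by field_simp
    rw [e1, e2]
    field_simp
    ring
  obtain ⟨c, hc⟩ : ∃ c, ∀ v ∈ Set.Ioi (0:ℝ), lagF (v/(v+1)) - lagA v = c :=
    isOpen_Ioi.exists_is_const_of_deriv_eq_zero isPreconnected_Ioi
      (fun v hv => (hd v hv).differentiableAt.differentiableWithinAt) (fun v hv => (hd v hv).deriv)
  have hF0 : lagF 0 = 0 := by
    unfold lagF
    rw [tsum_eq_single 0]
    · simp
    · intro n hn; simp [hn]
  have hl : Filter.Tendsto (fun v => lagF (v/(v+1)) - lagA v) (nhdsWithin 0 (Set.Ioi 0)) (nhds 0) := by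
    have hc1 : ContinuousAt lagF (0/(0+1)) := by
      simpa using (lagF_deriv (t := 0) (by simp)).continuousAt
    have hc2 : ContinuousAt (fun v : ℝ => v/(v+1)) 0 :=
      continuousAt_id.div (by fun_prop) (by norm_num)
    have hc3 : ContinuousAt (fun v : ℝ => lagF (v/(v+1))) 0 :=
      ContinuousAt.comp (f := fun v : ℝ => v/(v+1)) hc1 hc2
    have := hc3.tendsto.mono_left (nhdsWithin_le_nhds (s := Set.Ioi 0))
    simpa [hF0] using this.sub lagA_zero
  have hl2 : Filter.Tendsto (fun v => lagF (v/(v+1)) - lagA v) (nhdsWithin 0 (Set.Ioi 0)) (nhds c) := by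
    apply tendsto_const_nhds.congr'
    filter_upwards [self_mem_nhdsWithin] with v hv
    exact (hc v hv).symm
  have := hc u hu
  rw [tendsto_nhds_unique hl2 hl] at this
  linarith

theorem laguerre_series_eulerMascheroni :
    Filter.Tendsto (fun N => ∑ n ∈ Finset.Icc 1 N, laguerreOne n / (n : ℝ))
      Filter.atTop (nhds (-Real.eulerMascheroniConstant)) := by
  obtain ⟨S, hS⟩ := lag_conv
  have habel : Filter.Tendsto lagF (nhdsWithin 1 (Set.Iio 1)) (nhds S) :=
    Real.tendsto_tsum_powerSeries_nhdsWithin_lt hS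
  have ht : Filter.Tendsto (fun u : ℝ => u/(u+1)) Filter.atTop (nhdsWithin 1 (Set.Iio 1)) := by
    apply tendsto_nhdsWithin_of_tendsto_nhds_of_eventually_within
    · have h : Filter.Tendsto (fun u : ℝ => 1 - (u+1)⁻¹) Filter.atTop (nhds (1 - 0)) :=
        (Filter.tendsto_atTop_add_const_right _ 1 Filter.tendsto_id).inv_tendsto_atTop.const_sub 1
      rw [sub_zero] at h
      apply h.congr'
      filter_upwards [Filter.eventually_gt_atTop 0] with u hu
      have : u + 1 ≠ 0 := by linarith
      field_simp
      ring
    · filter_upwards [Filter.eventually_gt_atTop 0] with u hu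
      show u/(u+1) < 1
      rw [div_lt_one (by linarith)]; linarith
  have h1 : Filter.Tendsto lagA Filter.atTop (nhds S) := by
    apply (habel.comp ht).congr'
    filter_upwards [Filter.eventually_gt_atTop 0] with u hu
    exact lagF_eq hu
  rw [← tendsto_nhds_unique h1 lagA_top]
  refine ((Filter.tendsto_add_atTop_iff_nat 1).2 hS).congr (fun N => ?_)
  rw [Finset.sum_range_succ', Finset.range_eq_Ico, Finset.sum_Ico_add' (fun n : ℕ => laguerreOne n / (n:ℝ)) 0 N 1]
  simp
  rfl
end

section
/- For every positive integer N, ln(N!) = ∑_{n=1}^N ∑_{k=1}^n [(-1)^{n+k} · (2k-1) / ((n-k)! · (k+n-1)! · (2n-1))] · [(N+n-1)! / (N-n)!] · ln k. -/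
lemma lfds_partial (a d m : ℕ) (hm : m ≤ d) :
    (d : ℝ) * (2 * a + d + 1) * ∑ j ∈ Finset.range m,
      (-1 : ℝ) ^ j * ((2 * a + d + j).factorial : ℝ) /
        ((j.factorial : ℝ) * ((2 * a + 1 + j).factorial : ℝ) * ((d - j).factorial : ℝ)) =
    - ((m : ℝ) * (2 * a + 1 + m)) * ((-1 : ℝ) ^ m * ((2 * a + d + m).factorial : ℝ) /
        ((m.factorial : ℝ) * ((2 * a + 1 + m).factorial : ℝ) * ((d - m).factorial : ℝ))) := by
  induction m with
  | zero => simp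
  | succ m ih =>
    rw [Finset.sum_range_succ, mul_add, ih (by omega)]
    obtain ⟨e, rfl⟩ : ∃ e, d = m + 1 + e := ⟨d - (m + 1), by omega⟩
    have h1 : m + 1 + e - m = e + 1 := by omega
    have h2 : m + 1 + e - (m + 1) = e := by omega
    have h3 : 2 * a + (m + 1 + e) + (m + 1) = (2 * a + (m + 1 + e) + m) + 1 := by omega
    have h4 : 2 * a + 1 + (m + 1) = (2 * a + 1 + m) + 1 := by omega
    rw [h1, h2, h3, h4]
    simp only [Nat.factorial_succ (2 * a + (m + 1 + e) + m), Nat.factorial_succ (2 * a + 1 + m),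
      Nat.factorial_succ m, Nat.factorial_succ e]
    have p1 := Nat.cast_ne_zero (R := ℝ).2 (Nat.factorial_ne_zero m)
    have p2 := Nat.cast_ne_zero (R := ℝ).2 (Nat.factorial_ne_zero e)
    have p3 := Nat.cast_ne_zero (R := ℝ).2 (Nat.factorial_ne_zero (2 * a + 1 + m))
    generalize ((2 * a + (m + 1 + e) + m).factorial) = X at *
    generalize ((2 * a + 1 + m).factorial) = Y at *
    generalize m.factorial = Z at *
    generalize e.factorial = W at *
    push_cast
    have q1 : (m : ℝ) + 1 ≠ 0 := by positivity
    have q2 : (e : ℝ) + 1 ≠ 0 := by positivity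
    have q3 : (2 * a + 1 + m : ℝ) + 1 ≠ 0 := by positivity
    rw [pow_succ]
    field_simp
    ring

lemma lfds_zero (a d : ℕ) :
    ∑ j ∈ Finset.range (d + 1 + 1),
      (-1 : ℝ) ^ j * ((2 * a + (d + 1) + j).factorial : ℝ) /
        ((j.factorial : ℝ) * ((2 * a + 1 + j).factorial : ℝ) * ((d + 1 - j).factorial : ℝ)) = 0 := by
  have h := lfds_partial a (d + 1) (d + 1) le_rfl
  have hp : ((d + 1 : ℕ) : ℝ) * (2 * a + (d + 1 : ℕ) + 1) ≠ 0 := by positivity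
  rw [Finset.sum_range_succ]
  apply mul_left_cancel₀ hp
  rw [mul_add, h]
  ring

lemma lfds_one (a d : ℕ) :
    ∑ j ∈ Finset.range (d + 1),
      (-1 : ℝ) ^ j * (2 * a + 1) /
        ((j.factorial : ℝ) * ((2 * a + 1 + j).factorial : ℝ) * (2 * a + 2 * j + 1)) *
        (((2 * a + d + j + 1).factorial : ℝ) / ((d - j).factorial : ℝ)) = 1 := by
  induction d with
  | zero =>
    have p := Nat.cast_ne_zero (R := ℝ).2 (Nat.factorial_ne_zero (2 * a + 1))
    have q : (2 * a + 1 : ℝ) ≠ 0 := by positivity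
    simp
    field_simp
  | succ d ih =>
    have hz := lfds_zero a d
    rw [Finset.sum_range_succ] at hz ⊢
    refine Eq.trans ?_ ih
    rw [← sub_eq_zero, add_sub_right_comm, ← Finset.sum_sub_distrib]
    refine Eq.trans ?_ (mul_eq_zero_of_right (2 * a + 1 : ℝ) hz)
    conv_rhs => rw [mul_add, Finset.mul_sum]
    congr 1
    · apply Finset.sum_congr rfl
      intro j hj
      rw [Finset.mem_range] at hj
      obtain ⟨e, rfl⟩ : ∃ e, d = j + e := ⟨d - j, by omega⟩
      have h1 : j + e + 1 - j = e + 1 := by omega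
      have h2 : j + e - j = e := by omega
      have h3 : 2 * a + (j + e + 1) + j + 1 = (2 * a + (j + e) + j + 1) + 1 := by omega
      have h4 : 2 * a + (j + e + 1) + j = (2 * a + (j + e) + j + 1) := by omega
      rw [h1, h2, h3, h4]
      simp only [Nat.factorial_succ (2 * a + (j + e) + j + 1), Nat.factorial_succ e]
      have p1 := Nat.cast_ne_zero (R := ℝ).2 (Nat.factorial_ne_zero j)
      have p2 := Nat.cast_ne_zero (R := ℝ).2 (Nat.factorial_ne_zero e)
      have p3 := Nat.cast_ne_zero (R := ℝ).2 (Nat.factorial_ne_zero (2 * a + 1 + j))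
      generalize ((2 * a + (j + e) + j + 1).factorial) = X at *
      generalize ((2 * a + 1 + j).factorial) = Y at *
      generalize j.factorial = Z at *
      generalize e.factorial = W at *
      push_cast
      have q1 : (2 * a + 2 * j + 1 : ℝ) ≠ 0 := by positivity
      have q2 : (e : ℝ) + 1 ≠ 0 := by positivity
      field_simp
      ring
    · rw [Nat.factorial_succ (2 * a + (d + 1) + (d + 1))]
      have p1 := Nat.cast_ne_zero (R := ℝ).2 (Nat.factorial_ne_zero (d + 1))
      have p3 := Nat.cast_ne_zero (R := ℝ).2 (Nat.factorial_ne_zero (2 * a + 1 + (d + 1)))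
      rw [Nat.sub_self, Nat.factorial_zero]
      generalize ((2 * a + (d + 1) + (d + 1)).factorial) = X at *
      generalize ((2 * a + 1 + (d + 1)).factorial) = Y at *
      generalize (d + 1).factorial = Z at *
      push_cast
      have q1 : (2 * a + 2 * (d + 1) + 1 : ℝ) ≠ 0 := by positivity
      field_simp
      ring

theorem log_factorial_double_sum (N : ℕ) (hN : 1 ≤ N) :
    Real.log (Nat.factorial N : ℝ) =
      ∑ n ∈ Finset.Icc 1 N, ∑ k ∈ Finset.Icc 1 n,
        ((-1) ^ (n + k) * (2 * (k : ℝ) - 1) /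
            ((Nat.factorial (n - k) : ℝ) * (Nat.factorial (k + n - 1) : ℝ) *
              (2 * (n : ℝ) - 1))) *
          ((Nat.factorial (N + n - 1) : ℝ) / (Nat.factorial (N - n) : ℝ)) *
          Real.log (k : ℝ) := by
  have hs : ∀ (f : ℕ → ℕ → ℝ), ∑ n ∈ Finset.Icc 1 N, ∑ k ∈ Finset.Icc 1 n, f n k =
      ∑ k ∈ Finset.Icc 1 N, ∑ n ∈ Finset.Icc k N, f n k := by
    intro f
    apply Finset.sum_comm'
    intro x y
    simp only [Finset.mem_Icc]
    omega
  have hf : ∀ M : ℕ, ∏ i ∈ Finset.Icc 1 M, i = M.factorial := by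
    intro M
    induction M with
    | zero => simp
    | succ M ih => rw [Finset.prod_Icc_succ_top (by omega), ih, Nat.factorial_succ, mul_comm]
  rw [hs, ← hf, Nat.cast_prod, Real.log_prod]
  · apply Finset.sum_congr rfl
    intro k hk
    rw [Finset.mem_Icc] at hk
    rw [← Finset.sum_mul]
    obtain ⟨a, rfl⟩ : ∃ a, k = a + 1 := ⟨k - 1, by omega⟩
    obtain ⟨d, rfl⟩ : ∃ d, N = a + 1 + d := ⟨N - (a + 1), by omega⟩
    have h1 := lfds_one a d
    rw [← Finset.Ico_add_one_right_eq_Icc, Finset.sum_Ico_eq_sum_range,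
      show a + 1 + d + 1 - (a + 1) = d + 1 by omega]
    conv_lhs => rw [← one_mul (Real.log _), ← h1]
    congr 1
    apply Finset.sum_congr rfl
    intro j hj
    rw [show a + 1 + j - (a + 1) = j by omega,
      show a + 1 + (a + 1 + j) - 1 = 2 * a + 1 + j by omega,
      show a + 1 + d + (a + 1 + j) - 1 = 2 * a + d + j + 1 by omega,
      show a + 1 + d - (a + 1 + j) = d - j by omega,
      show a + 1 + j + (a + 1) = 2 * (a + 1) + j by omega, pow_add, pow_mul]
    push_cast
    rw [show (2 * ((a : ℝ) + 1) - 1) = 2 * a + 1 by ring,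
      show (2 * ((a : ℝ) + 1 + j) - 1) = 2 * a + 2 * j + 1 by ring]
    norm_num
  · intro k hk
    rw [Finset.mem_Icc] at hk
    exact Nat.cast_ne_zero.2 (by omega)
end
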